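/- Properties of the effective Hamiltonian. Assume (H1)–(H4) and let H̄(p,L) be the effective Hamiltonian of the ergodicity theorem. Then H̄ : ℝ^N×ℝ → ℝ is continuous and satisfies: (i) for every p ∈ ℝ^N, H̄(p,L) → +∞ as L → +∞ and H̄(p,L) → −∞ as L → −∞; (ii) for every p ∈ ℝ^N, L ↦ H̄(p,L) is non-decreasing on ℝ; (iii) if σ(τ,y)=σ(τ,−y) for all (τ,y), then H̄(p,L) = H̄(−p,L); (iv) if W'(−v) = −W'(v) for all v and σ(τ,−y) = −σ(τ,y) for all (τ,y), then H̄(p,−L) = −H̄(p,L). -/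

import Mathlib

/-!
Solutions of the cell problem satisfy a comparison principle on the whole space: the difference of
a sub- and a supersolution, penalised by a small multiple of `1 + log (1 + |x|²)`, attains its
maximum, and doubling the variables there gives `∂_t (u - v) ≤ K (u - v)` in the limit, hence a
Gronwall estimate. Since the weight grows slower than every power, the Lévy operator acts on it
and its contribution vanishes with the penalisation.

Comparison with `(L ± C) τ`, with a second value of `L`, and with the solutions `w(τ, -y)` and
`-w(τ, -y)` gives growth, monotonicity and the two symmetries. For continuity, comparing `w` with
its translates by lattice vectors `k`, corrected by the integer part of `p · k`, shows that an upper
bound of `w(T, ·)` on a large ball becomes global after adding `1`; rounding it up to an integer `n`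
and iterating the comparison over the times `jT` bounds `H̄(p, L)` by `n / T`. For fixed large `T`
this bound is stable under perturbations of `(p, L)`, so `H̄` is upper semicontinuous, and the
symmetry `w ↦ -w` of the class of cell problems turns this into lower semicontinuity.
-/

open MeasureTheory Filter Metric Set RealInnerProductSpace

noncomputable section

/-- `ℝ^N` as a Euclidean space. -/
abbrev EN (N : ℕ) := EuclideanSpace ℝ (Fin N)

/-- The singular kernel `g(z/|z|) |z|^{-N-2s}` of the anisotropic Lévy operator. -/
noncomputable def levyKernel (N : ℕ) (s : ℝ) (g : EN N → ℝ) (z : EN N) : ℝ :=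
  g (‖z‖⁻¹ • z) * ‖z‖ ^ (-(N : ℝ) - 2 * s)

/-- `I^{1,r}[φ, x]`: integral over `|z| ≤ r` of the second order increment of `φ`. -/
noncomputable def levyI1 (N : ℕ) (s : ℝ) (g : EN N → ℝ) (φ : EN N → ℝ) (r : ℝ) (x : EN N) : ℝ :=
  ∫ z in {z : EN N | ‖z‖ ≤ r}, (φ (x + z) - φ x - fderiv ℝ φ x z) * levyKernel N s g z

/-- `I^{2,r}[u, x]`: integral over `|z| > r` of the increment of `u`. -/
noncomputable def levyI2 (N : ℕ) (s : ℝ) (g : EN N → ℝ) (u : EN N → ℝ) (r : ℝ) (x : EN N) : ℝ :=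
  ∫ z in {z : EN N | r < ‖z‖}, (u (x + z) - u x) * levyKernel N s g z

/-- The anisotropic Lévy operator `I_s` of order `2s`, defined as a principal value. -/
noncomputable def levyOp (N : ℕ) (s : ℝ) (g : EN N → ℝ) (φ : EN N → ℝ) (x : EN N) : ℝ :=
  limUnder (nhdsWithin 0 (Ioi (0:ℝ)))
    (fun ρ => ∫ y in {y : EN N | ρ < ‖y‖}, (φ (x + y) - φ x) * levyKernel N s g y)

/-- (H1): `g` is continuous, positive on the sphere and even. -/
def H1 (N : ℕ) (g : EN N → ℝ) : Prop :=
  Continuous g ∧ (∀ z : EN N, ‖z‖ = 1 → 0 < g z) ∧ (∀ z : EN N, g (-z) = g z)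

/-- (H2): `W ∈ C^{1,1}(ℝ)` and `W(v+1) = W(v)`. -/
def H2 (W : ℝ → ℝ) : Prop :=
  ContDiff ℝ 1 W ∧ (∃ K : NNReal, LipschitzWith K (deriv W)) ∧ ∀ v, W (v + 1) = W v

/-- (H3): `σ ∈ C^{0,1}(ℝ⁺ × ℝ^N)`, 1-periodic in `t` and ℤ^N-periodic in `x`. -/
def H3 (N : ℕ) (σ : ℝ → EN N → ℝ) : Prop :=
  (∃ K : NNReal, LipschitzWith K (fun q : ℝ × EN N => σ q.1 q.2)) ∧
  (∀ t x, σ (t + 1) x = σ t x) ∧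
  (∀ (k : Fin N → ℤ) (t : ℝ) (x : EN N), σ t (x + (WithLp.equiv 2 (Fin N → ℝ)).symm (fun j => (k j : ℝ))) = σ t x)

/-- (H4): `u₀ ∈ W^{2,∞}(ℝ^N)`. -/
def H4 (N : ℕ) (u₀ : EN N → ℝ) : Prop :=
  ContDiff ℝ 2 u₀ ∧
  ∃ M, ∀ x, |u₀ x| ≤ M ∧ ‖fderiv ℝ u₀ x‖ ≤ M ∧ ‖fderiv ℝ (fderiv ℝ u₀) x‖ ≤ M

/-- Boundedness on `(0,T) × ℝ^N` for every `T > 0`. -/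
def LocBddPos (N : ℕ) (u : ℝ → EN N → ℝ) : Prop :=
  ∀ T > 0, ∃ M, ∀ t ∈ Ioc (0:ℝ) T, ∀ x, |u t x| ≤ M

/-- Viscosity subsolution of `∂_t u = F(t, x, u, ∇_x u, I_s[u(t,·)])` with initial datum `u₀`. -/
def IsSubsol (N : ℕ) (s : ℝ) (g : EN N → ℝ)
    (F : ℝ → EN N → ℝ → (EN N →L[ℝ] ℝ) → ℝ → ℝ)
    (u₀ : EN N → ℝ) (u : ℝ → EN N → ℝ) : Prop :=
  UpperSemicontinuousOn (fun q : ℝ × EN N => u q.1 q.2) (Ici 0 ×ˢ univ) ∧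
  LocBddPos N u ∧
  (∀ x, u 0 x ≤ u₀ x) ∧
  ∀ (t₀ : ℝ) (x₀ : EN N), 0 < t₀ →
    ∀ (φ : ℝ → EN N → ℝ), ContDiff ℝ 2 (fun q : ℝ × EN N => φ q.1 q.2) →
    ∀ τ r : ℝ, 0 < τ → τ < t₀ → 0 < r →
    (∀ t x, t ∈ Ioo (t₀ - τ) (t₀ + τ) → x ∈ ball x₀ r →
      u t x - φ t x ≤ u t₀ x₀ - φ t₀ x₀) →
    deriv (fun t => φ t x₀) t₀ -
      F t₀ x₀ (u t₀ x₀) (fderiv ℝ (fun x => φ t₀ x) x₀)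
        (levyI1 N s g (fun x => φ t₀ x) r x₀ + levyI2 N s g (fun x => u t₀ x) r x₀) ≤ 0

/-- Viscosity supersolution of `∂_t u = F(t, x, u, ∇_x u, I_s[u(t,·)])` with initial datum `u₀`. -/
def IsSupersol (N : ℕ) (s : ℝ) (g : EN N → ℝ)
    (F : ℝ → EN N → ℝ → (EN N →L[ℝ] ℝ) → ℝ → ℝ)
    (u₀ : EN N → ℝ) (u : ℝ → EN N → ℝ) : Prop :=
  LowerSemicontinuousOn (fun q : ℝ × EN N => u q.1 q.2) (Ici 0 ×ˢ univ) ∧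
  LocBddPos N u ∧
  (∀ x, u₀ x ≤ u 0 x) ∧
  ∀ (t₀ : ℝ) (x₀ : EN N), 0 < t₀ →
    ∀ (φ : ℝ → EN N → ℝ), ContDiff ℝ 2 (fun q : ℝ × EN N => φ q.1 q.2) →
    ∀ τ r : ℝ, 0 < τ → τ < t₀ → 0 < r →
    (∀ t x, t ∈ Ioo (t₀ - τ) (t₀ + τ) → x ∈ ball x₀ r →
      u t₀ x₀ - φ t₀ x₀ ≤ u t x - φ t x) →
    0 ≤ deriv (fun t => φ t x₀) t₀ -
      F t₀ x₀ (u t₀ x₀) (fderiv ℝ (fun x => φ t₀ x) x₀)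
        (levyI1 N s g (fun x => φ t₀ x) r x₀ + levyI2 N s g (fun x => u t₀ x) r x₀)

/-- Viscosity solution in `C_b(ℝ⁺ × ℝ^N)`. -/
def IsSol (N : ℕ) (s : ℝ) (g : EN N → ℝ)
    (F : ℝ → EN N → ℝ → (EN N →L[ℝ] ℝ) → ℝ → ℝ)
    (u₀ : EN N → ℝ) (u : ℝ → EN N → ℝ) : Prop :=
  ContinuousOn (fun q : ℝ × EN N => u q.1 q.2) (Ici 0 ×ˢ univ) ∧
  IsSubsol N s g F u₀ u ∧ IsSupersol N s g F u₀ u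

/-- The right-hand side of the cell problem
`∂_τ w = I_s[w(τ,·)] + L − W'(w + p·y) + σ(τ,y)`. -/
def cellF (N : ℕ) (W : ℝ → ℝ) (σ : ℝ → EN N → ℝ) (p : EN N) (L : ℝ) :
    ℝ → EN N → ℝ → (EN N →L[ℝ] ℝ) → ℝ → ℝ :=
  fun τ y v _ I => I + L - deriv W (v + ⟪p, y⟫) + σ τ y

/-- `w(τ,y)/τ → lam` as `τ → +∞`, locally uniformly in `y`. -/
def SlopeLim (N : ℕ) (w : ℝ → EN N → ℝ) (lam : ℝ) : Prop :=
  ∀ ε > 0, ∀ R > 0, ∃ T : ℝ, ∀ τ, T ≤ τ → ∀ y : EN N, ‖y‖ ≤ R → |w τ y / τ - lam| ≤ ε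

end

open scoped Topology

/-! ### The logarithmic weight -/

/-- The weight `1 + log (1 + ‖x‖²)`, used to localise maxima on the whole space: it is coercive,
and it grows slower than any power, so that Lévy operators of every positive order act on it. -/
noncomputable def logWeight {E : Type*} [Norm E] (x : E) : ℝ := 1 + Real.log (1 + ‖x‖ ^ 2)

section LogWeight

variable {E : Type*} [NormedAddCommGroup E]

lemma one_le_logWeight (x : E) : 1 ≤ logWeight x := by
  have : 0 ≤ Real.log (1 + ‖x‖ ^ 2) := Real.log_nonneg (by linarith [sq_nonneg ‖x‖])
  unfold logWeight
  linarith

lemma logWeight_nonneg (x : E) : 0 ≤ logWeight x := zero_le_one.trans (one_le_logWeight x)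

lemma logWeight_le_of_norm_le {x : E} {R : ℝ} (hx : ‖x‖ ≤ R) :
    logWeight x ≤ 1 + Real.log (1 + R ^ 2) := by
  have := norm_nonneg x
  unfold logWeight
  gcongr

lemma continuous_logWeight : Continuous (logWeight : E → ℝ) := by
  unfold logWeight
  exact continuous_const.add (Continuous.log (by fun_prop) fun x => by positivity)

lemma exists_forall_lt_norm_imp_lt_logWeight (C : ℝ) :
    ∃ R : ℝ, 0 < R ∧ ∀ x : E, R < ‖x‖ → C < logWeight x := by
  refine ⟨Real.exp |C|, Real.exp_pos _, fun x hx => ?_⟩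
  have h_one : 1 ≤ Real.exp |C| := Real.one_le_exp (abs_nonneg C)
  have h_log : |C| ≤ Real.log (1 + ‖x‖ ^ 2) := by
    rw [Real.le_log_iff_exp_le (by positivity)]
    nlinarith
  unfold logWeight
  linarith [le_abs_self C]

-- Peetre's inequality in logarithmic form; the constant `log 2` is absorbed since `log 2 ≤ 1`.
lemma logWeight_add_le (x z : E) : logWeight (x + z) ≤ logWeight x + logWeight z := by
  have h_peetre : 1 + ‖x + z‖ ^ 2 ≤ 2 * (1 + ‖z‖ ^ 2) * (1 + ‖x‖ ^ 2) := by
    have : ‖x + z‖ ^ 2 ≤ (‖x‖ + ‖z‖) ^ 2 := by gcongr; exact norm_add_le x z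
    nlinarith [sq_nonneg (‖x‖ - ‖z‖), mul_nonneg (sq_nonneg ‖x‖) (sq_nonneg ‖z‖)]
  have h_log := Real.log_le_log (by positivity) h_peetre
  rw [Real.log_mul (by positivity) (by positivity), Real.log_mul two_ne_zero (by positivity)]
    at h_log
  unfold logWeight
  linarith [Real.log_two_lt_d9]

lemma abs_logWeight_add_sub_le (x z : E) : |logWeight (x + z) - logWeight x| ≤ logWeight z := by
  have h_back := logWeight_add_le (x + z) (-z)
  rw [add_neg_cancel_right] at h_back
  have h_neg : logWeight (-z) = logWeight z := by simp only [logWeight, norm_neg]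
  rw [abs_le]
  constructor <;> linarith [logWeight_add_le x z]

end LogWeight

section LogWeightDerivative

variable {E : Type*} [NormedAddCommGroup E] [InnerProductSpace ℝ E]

lemma contDiff_logWeight : ContDiff ℝ 2 (logWeight : E → ℝ) := by
  unfold logWeight
  exact contDiff_const.add <|
    ContDiff.log (contDiff_const.add (contDiff_norm_sq ℝ)) fun x => by positivity

lemma fderiv_logWeight (x z : E) :
    fderiv ℝ (logWeight : E → ℝ) x z = 2 * ⟪x, z⟫ / (1 + ‖x‖ ^ 2) := by
  have h_sq : HasFDerivAt (fun x : E => 1 + ‖x‖ ^ 2) (2 • (innerSL ℝ x)) x :=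
    (hasStrictFDerivAt_norm_sq x).hasFDerivAt.const_add 1
  have h_weight : HasFDerivAt (logWeight : E → ℝ) _ x := (h_sq.log (by positivity)).const_add 1
  rw [h_weight.fderiv]
  simp only [smul_apply, innerSL_apply_apply, nsmul_eq_mul, smul_eq_mul]
  push_cast
  ring

-- Concavity of the logarithm, applied to `1 + ‖x + z‖²` over `1 + ‖x‖²`.
lemma logWeight_add_sub_sub_fderiv_le (x z : E) :
    logWeight (x + z) - logWeight x - fderiv ℝ logWeight x z ≤ ‖z‖ ^ 2 := by
  have hx : 0 < 1 + ‖x‖ ^ 2 := by positivity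
  have hxz : 0 < 1 + ‖x + z‖ ^ 2 := by positivity
  have h_log := Real.log_le_sub_one_of_pos (div_pos hxz hx)
  rw [Real.log_div hxz.ne' hx.ne'] at h_log
  have h_quot : (1 + ‖x + z‖ ^ 2) / (1 + ‖x‖ ^ 2) - 1
      = 2 * ⟪x, z⟫ / (1 + ‖x‖ ^ 2) + ‖z‖ ^ 2 / (1 + ‖x‖ ^ 2) := by
    rw [norm_add_sq_real]
    field_simp
    ring
  have h_div : ‖z‖ ^ 2 / (1 + ‖x‖ ^ 2) ≤ ‖z‖ ^ 2 :=
    div_le_self (by positivity) (by linarith [sq_nonneg ‖x‖])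
  rw [fderiv_logWeight]
  unfold logWeight
  linarith

end LogWeightDerivative

/-! ### Lévy measures and their operators -/

section SymmetricIntegrals

variable {E : Type*} [NormedAddCommGroup E] [MeasurableSpace E] [BorelSpace E] {ν : Measure E}
  [ν.IsNegInvariant]

lemma setIntegral_comp_neg_of_forall_mem_iff {S : Set E} (hS : ∀ z, -z ∈ S ↔ z ∈ S) (f : E → ℝ) :
    ∫ z in S, f (-z) ∂ν = ∫ z in S, f z ∂ν := by
  have h_pre : Neg.neg ⁻¹' S = S := Set.ext hS
  have h := (Measure.measurePreserving_neg ν).setIntegral_preimage_emb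
    (MeasurableEquiv.neg E).measurableEmbedding f S
  rwa [h_pre] at h

lemma setIntegral_eq_zero_of_odd {S : Set E} (hS : ∀ z, -z ∈ S ↔ z ∈ S) {f : E → ℝ}
    (hf : ∀ z, f (-z) = -f z) : ∫ z in S, f z ∂ν = 0 := by
  have h := setIntegral_comp_neg_of_forall_mem_iff (ν := ν) hS f
  simp only [hf, integral_neg] at h
  linarith

end SymmetricIntegrals

/-- Symmetric Lévy measures: `ν` is invariant under `z ↦ -z`, integrates `‖z‖²` near the origin
and the logarithmic weight at infinity. The last condition makes the Lévy operator finite on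
`logWeight`; it holds for every kernel of fractional Laplacian type. -/
class IsSymmLevyMeasure {E : Type*} [NormedAddCommGroup E] [MeasurableSpace E]
    (ν : Measure E) : Prop extends ν.IsNegInvariant where
  integrableOn_norm_sq : IntegrableOn (fun z => ‖z‖ ^ 2) {z | ‖z‖ ≤ 1} ν
  integrableOn_logWeight : IntegrableOn logWeight {z | 1 < ‖z‖} ν

/-- The part `∫_{‖z‖ ≤ r} (φ (x + z) - φ x - Dφ(x) z) dν` of a Lévy operator that is carried by
the small jumps. -/
noncomputable def nearLevy {E : Type*} [NormedAddCommGroup E] [NormedSpace ℝ E]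
    [MeasurableSpace E] (ν : Measure E) (φ : E → ℝ) (r : ℝ) (x : E) : ℝ :=
  ∫ z in {z | ‖z‖ ≤ r}, (φ (x + z) - φ x - fderiv ℝ φ x z) ∂ν

/-- The part `∫_{r < ‖z‖} (u (x + z) - u x) dν` of a Lévy operator that is carried by the large
jumps. -/
noncomputable def farLevy {E : Type*} [NormedAddCommGroup E] [MeasurableSpace E]
    (ν : Measure E) (u : E → ℝ) (r : ℝ) (x : E) : ℝ :=
  ∫ z in {z | r < ‖z‖}, (u (x + z) - u x) ∂ν

lemma fderiv_comp_neg_apply {E : Type*} [NormedAddCommGroup E] [NormedSpace ℝ E]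
    (φ : E → ℝ) (x z : E) :
    fderiv ℝ (fun y => φ (-y)) x z = -fderiv ℝ φ (-x) z := by
  have h := congrArg (· z) ((ContinuousLinearEquiv.neg ℝ).comp_right_fderiv (f := φ) (x := x))
  exact h.trans (map_neg (fderiv ℝ φ (-x)) z)

section OperatorAlgebra

variable {E : Type*} [NormedAddCommGroup E] [MeasurableSpace E] (ν : Measure E)

lemma farLevy_const_mul (k : ℝ) (u : E → ℝ) (r : ℝ) (x : E) :
    farLevy ν (fun y => k * u y) r x = k * farLevy ν u r x := by
  simp only [farLevy, ← mul_sub, integral_const_mul]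

lemma farLevy_neg (u : E → ℝ) (r : ℝ) (x : E) :
    farLevy ν (fun y => -u y) r x = -farLevy ν u r x := by
  simpa only [neg_one_mul] using farLevy_const_mul ν (-1) u r x

lemma farLevy_add_const (u : E → ℝ) (c r : ℝ) (x : E) :
    farLevy ν (fun y => u y + c) r x = farLevy ν u r x := by
  simp only [farLevy, add_sub_add_right_eq_sub]

lemma farLevy_comp_add_right (u : E → ℝ) (k : E) (r : ℝ) (x : E) :
    farLevy ν (fun y => u (y + k)) r x = farLevy ν u r (x + k) := by
  simp only [farLevy, add_right_comm x _ k]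

lemma farLevy_comp_neg [BorelSpace E] [ν.IsNegInvariant] (u : E → ℝ) (r : ℝ) (x : E) :
    farLevy ν (fun y => u (-y)) r x = farLevy ν u r (-x) := by
  unfold farLevy
  rw [← setIntegral_comp_neg_of_forall_mem_iff (by simp)]
  simp only [neg_add, neg_neg]

variable [NormedSpace ℝ E]

lemma nearLevy_const_mul (k : ℝ) (φ : E → ℝ) (r : ℝ) (x : E) :
    nearLevy ν (fun y => k * φ y) r x = k * nearLevy ν φ r x := by
  have h_fderiv : fderiv ℝ (fun y => k * φ y) x = k • fderiv ℝ φ x :=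
    congrFun (fderiv_const_smul_field k) x
  simp only [nearLevy, h_fderiv, smul_apply, smul_eq_mul, ← mul_sub,
    integral_const_mul]

lemma nearLevy_neg (φ : E → ℝ) (r : ℝ) (x : E) :
    nearLevy ν (fun y => -φ y) r x = -nearLevy ν φ r x := by
  simpa only [neg_one_mul] using nearLevy_const_mul ν (-1) φ r x

lemma nearLevy_add_const (φ : E → ℝ) (c r : ℝ) (x : E) :
    nearLevy ν (fun y => φ y + c) r x = nearLevy ν φ r x := by
  simp only [nearLevy, add_sub_add_right_eq_sub, fderiv_add_const]

lemma nearLevy_comp_add_right (φ : E → ℝ) (k : E) (r : ℝ) (x : E) :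
    nearLevy ν (fun y => φ (y + k)) r x = nearLevy ν φ r (x + k) := by
  simp only [nearLevy, add_right_comm x _ k, fderiv_comp_add_right]

lemma nearLevy_comp_neg [BorelSpace E] [ν.IsNegInvariant] (φ : E → ℝ) (r : ℝ) (x : E) :
    nearLevy ν (fun y => φ (-y)) r x = nearLevy ν φ r (-x) := by
  unfold nearLevy
  rw [← setIntegral_comp_neg_of_forall_mem_iff (by simp)]
  simp only [fderiv_comp_neg_apply, map_neg, neg_add, neg_neg]

end OperatorAlgebra

section NormSets

variable {E : Type*} [NormedAddCommGroup E]

lemma setOf_lt_norm_eq_union {r : ℝ} (hr : r ≤ 1) :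
    {z : E | r < ‖z‖} = ({z | r < ‖z‖} ∩ {z | ‖z‖ ≤ 1}) ∪ {z | 1 < ‖z‖} := by
  ext z
  simp only [mem_ofPred_eq, mem_union, mem_inter_iff]
  refine ⟨fun h => (le_or_gt ‖z‖ 1).imp (⟨h, ·⟩) id, ?_⟩
  rintro (h | h)
  · exact h.1
  · exact hr.trans_lt h

lemma disjoint_norm_le_lt_norm (r : ℝ) :
    Disjoint ({z : E | r < ‖z‖} ∩ {z | ‖z‖ ≤ 1}) {z | 1 < ‖z‖} :=
  Set.disjoint_left.2 fun _ hz => not_lt_of_ge (show _ ≤ (1 : ℝ) from hz.2)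

end NormSets

section LevyMeasure

variable {E : Type*} [NormedAddCommGroup E] [MeasurableSpace E] [BorelSpace E] (ν : Measure E)
  [IsSymmLevyMeasure ν]

lemma measurableSet_norm_le (r : ℝ) : MeasurableSet {z : E | ‖z‖ ≤ r} :=
  (isClosed_le continuous_norm continuous_const).measurableSet

lemma measurableSet_lt_norm (r : ℝ) : MeasurableSet {z : E | r < ‖z‖} :=
  (isOpen_lt continuous_const continuous_norm).measurableSet

lemma integrableOn_logWeight_lt_norm {r : ℝ} (hr : 0 < r) :
    IntegrableOn logWeight {z : E | r < ‖z‖} ν := by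
  have h_inf := IsSymmLevyMeasure.integrableOn_logWeight (ν := ν)
  have h_annulus : IntegrableOn logWeight ({z : E | r < ‖z‖} ∩ {z | ‖z‖ ≤ 1}) ν := by
    refine Integrable.mono' ((IsSymmLevyMeasure.integrableOn_norm_sq.mono_set
      inter_subset_right).const_mul ((1 + Real.log 2) / r ^ 2))
      continuous_logWeight.aestronglyMeasurable <| ae_restrict_of_forall_mem
        ((measurableSet_lt_norm r).inter (measurableSet_norm_le 1)) ?_
    rintro z ⟨hrz : r < ‖z‖, hz : ‖z‖ ≤ 1⟩
    have h_weight := logWeight_le_of_norm_le hz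
    rw [one_pow, one_add_one_eq_two] at h_weight
    have h_ratio : 1 ≤ ‖z‖ ^ 2 / r ^ 2 := by
      rw [one_le_div (by positivity)]
      gcongr
    rw [Real.norm_of_nonneg (logWeight_nonneg z), div_mul_eq_mul_div, mul_div_assoc]
    exact h_weight.trans <| le_mul_of_one_le_right
      ((logWeight_nonneg z).trans h_weight) h_ratio
  refine (h_annulus.union h_inf).mono_set fun z (hz : r < ‖z‖) => ?_
  exact (le_or_gt ‖z‖ 1).imp (⟨hz, ·⟩) id

lemma integrableOn_const_lt_norm {r : ℝ} (hr : 0 < r) (C : ℝ) :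
    IntegrableOn (fun _ => C) {z : E | r < ‖z‖} ν := by
  refine ((integrableOn_logWeight_lt_norm ν hr).const_mul |C|).mono' aestronglyMeasurable_const ?_
  exact ae_of_all _ fun z => le_mul_of_one_le_right (abs_nonneg C) (one_le_logWeight z)

lemma integrableOn_increment_of_bounded {u : E → ℝ} (hu : Continuous u) {M : ℝ}
    (hM : ∀ x, |u x| ≤ M) {r : ℝ} (hr : 0 < r) (x : E) :
    IntegrableOn (fun z => u (x + z) - u x) {z | r < ‖z‖} ν :=
  (integrableOn_const_lt_norm ν hr (M + M)).mono'
    (by fun_prop : Continuous fun z => u (x + z) - u x).aestronglyMeasurable <|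
    ae_of_all _ fun _ => (norm_sub_le _ _).trans (add_le_add (hM _) (hM _))

lemma integrableOn_logWeight_increment {r : ℝ} (hr : 0 < r) (x : E) :
    IntegrableOn (fun z => logWeight (x + z) - logWeight x) {z | r < ‖z‖} ν :=
  (integrableOn_logWeight_lt_norm ν hr).mono'
    ((continuous_logWeight.comp (by fun_prop)).sub continuous_const).aestronglyMeasurable <|
    ae_of_all _ fun z => abs_logWeight_add_sub_le x z

lemma exists_setIntegral_norm_sq_lt {ε : ℝ} (hε : 0 < ε) :
    ∃ r : ℝ, 0 < r ∧ r ≤ 1 ∧ ∫ z in {z : E | ‖z‖ ≤ r}, ‖z‖ ^ 2 ∂ν < ε := by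
  have h_lim := tendsto_setIntegral_of_antitone (μ := ν) (f := fun z => ‖z‖ ^ 2)
    (s := fun n : ℕ => {z : E | ‖z‖ ≤ 1 / ((n : ℝ) + 1)}) (fun n => measurableSet_norm_le _)
    (fun m n hmn z (hz : ‖z‖ ≤ 1 / ((n : ℝ) + 1)) => hz.trans (by gcongr))
    ⟨0, by simpa using IsSymmLevyMeasure.integrableOn_norm_sq⟩
  have h_zero : ∫ z in ⋂ n : ℕ, {z : E | ‖z‖ ≤ 1 / ((n : ℝ) + 1)}, ‖z‖ ^ 2 ∂ν = 0 :=
    setIntegral_eq_zero_of_forall_eq_zero fun z hz => by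
      have : ‖z‖ ≤ 0 :=
        ge_of_tendsto' tendsto_one_div_add_atTop_nhds_zero_nat (mem_iInter.1 hz)
      rw [le_antisymm this (norm_nonneg z), zero_pow two_ne_zero]
  rw [h_zero] at h_lim
  obtain ⟨n, hn⟩ := (h_lim.eventually (gt_mem_nhds hε)).exists
  refine ⟨1 / ((n : ℝ) + 1), by positivity, ?_, hn⟩
  rw [div_le_one (by positivity)]
  linarith [(Nat.cast_nonneg n : (0 : ℝ) ≤ n)]

end LevyMeasure

section SmallJumps

variable {E : Type*} [NormedAddCommGroup E] [MeasurableSpace E] (ν : Measure E)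

/-- A bound, uniform in the base point, for the Lévy operator of `ν` acting on `logWeight`. -/
noncomputable def weightConst : ℝ :=
  ∫ z in {z | ‖z‖ ≤ 1}, ‖z‖ ^ 2 ∂ν + ∫ z in {z | 1 < ‖z‖}, logWeight z ∂ν

lemma weightConst_nonneg : 0 ≤ weightConst ν :=
  add_nonneg (integral_nonneg fun _ => by positivity) (integral_nonneg logWeight_nonneg)

variable [NormedSpace ℝ E] [IsSymmLevyMeasure ν]

lemma nearLevy_le {φ : E → ℝ} {A r : ℝ} (hA : 0 ≤ A) (hr : r ≤ 1) {x : E}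
    (hφ : ∀ z, φ (x + z) - φ x - fderiv ℝ φ x z ≤ A * ‖z‖ ^ 2) :
    nearLevy ν φ r x ≤ A * ∫ z in {z | ‖z‖ ≤ r}, ‖z‖ ^ 2 ∂ν := by
  have h_sq : IntegrableOn (fun z => A * ‖z‖ ^ 2) {z : E | ‖z‖ ≤ r} ν :=
    (IsSymmLevyMeasure.integrableOn_norm_sq.mono_set fun z hz => le_trans hz hr).const_mul A
  rw [← integral_const_mul]
  unfold nearLevy
  -- Without integrability of the increment the Bochner integral on the left is `0`.
  by_cases h_int : IntegrableOn (fun z => φ (x + z) - φ x - fderiv ℝ φ x z) {z | ‖z‖ ≤ r} ν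
  · exact setIntegral_mono h_int h_sq hφ
  · rw [integral_undef h_int]
    exact integral_nonneg fun z => by positivity

end SmallJumps

section WeightBound

variable {E : Type*} [NormedAddCommGroup E] [InnerProductSpace ℝ E] [MeasurableSpace E]
  [BorelSpace E] (ν : Measure E) [IsSymmLevyMeasure ν]

lemma setIntegral_annulus_logWeight_increment_le {r : ℝ} (hr : 0 < r) (x : E) :
    ∫ z in {z | r < ‖z‖} ∩ {z | ‖z‖ ≤ 1}, (logWeight (x + z) - logWeight x) ∂ν
      ≤ ∫ z in {z | ‖z‖ ≤ 1}, ‖z‖ ^ 2 ∂ν := by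
  set A : Set E := {z | r < ‖z‖} ∩ {z | ‖z‖ ≤ 1} with hA
  have h_sq : IntegrableOn (fun z => ‖z‖ ^ 2) A ν :=
    IsSymmLevyMeasure.integrableOn_norm_sq.mono_set inter_subset_right
  have h_lin : IntegrableOn (fderiv ℝ logWeight x) A ν := by
    refine ((integrableOn_const_lt_norm ν hr ‖fderiv ℝ logWeight x‖).mono_set
      inter_subset_left).mono' (fderiv ℝ logWeight x).continuous.aestronglyMeasurable <|
      ae_restrict_of_forall_mem ((measurableSet_lt_norm r).inter (measurableSet_norm_le 1)) ?_
    exact fun z hz => (fderiv ℝ logWeight x).unit_le_opNorm z hz.2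
  have h_odd : ∫ z in A, fderiv ℝ logWeight x z ∂ν = 0 :=
    setIntegral_eq_zero_of_odd (by simp [hA]) (map_neg _)
  calc ∫ z in A, (logWeight (x + z) - logWeight x) ∂ν
      ≤ ∫ z in A, (fderiv ℝ logWeight x z + ‖z‖ ^ 2) ∂ν :=
        setIntegral_mono ((integrableOn_logWeight_increment ν hr x).mono_set inter_subset_left)
          (h_lin.add h_sq) fun z => sub_le_iff_le_add'.1 (logWeight_add_sub_sub_fderiv_le x z)
    _ = ∫ z in A, ‖z‖ ^ 2 ∂ν := by rw [integral_add h_lin h_sq, h_odd, zero_add]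
    _ ≤ ∫ z in {z | ‖z‖ ≤ 1}, ‖z‖ ^ 2 ∂ν :=
        setIntegral_mono_set IsSymmLevyMeasure.integrableOn_norm_sq
          (ae_of_all _ fun z => by positivity) inter_subset_right.eventuallyLE

-- The bound does not depend on `r`: on the annulus `r < ‖z‖ ≤ 1` the first order term is odd.
lemma farLevy_logWeight_le {r : ℝ} (hr : 0 < r) (hr1 : r ≤ 1) (x : E) :
    farLevy ν logWeight r x ≤ weightConst ν := by
  have h_int := integrableOn_logWeight_increment ν hr x
  have h_inf : {z : E | 1 < ‖z‖} ⊆ {z | r < ‖z‖} := fun z hz => hr1.trans_lt hz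
  unfold farLevy
  rw [setOf_lt_norm_eq_union hr1, setIntegral_union (disjoint_norm_le_lt_norm r)
    (measurableSet_lt_norm 1) (h_int.mono_set inter_subset_left) (h_int.mono_set h_inf)]
  refine add_le_add (setIntegral_annulus_logWeight_increment_le ν hr x) ?_
  exact setIntegral_mono (h_int.mono_set h_inf) IsSymmLevyMeasure.integrableOn_logWeight
    fun z => sub_le_iff_le_add'.2 (logWeight_add_le x z)

lemma farLevy_add_le {u v : E → ℝ} (hu : Continuous u) (hv : Continuous v) {M M' : ℝ}
    (huM : ∀ x, |u x| ≤ M) (hvM : ∀ x, |v x| ≤ M') {r η : ℝ} (hr : 0 < r) (hr1 : r ≤ 1)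
    (hη : 0 ≤ η) {x y : E}
    (huv : ∀ z, u (x + z) + v (y + z) - η * logWeight (x + z) ≤ u x + v y - η * logWeight x) :
    farLevy ν u r x + farLevy ν v r y ≤ η * weightConst ν := by
  have hu_int := integrableOn_increment_of_bounded ν hu huM hr x
  have hv_int := integrableOn_increment_of_bounded ν hv hvM hr y
  calc farLevy ν u r x + farLevy ν v r y
      = ∫ z in {z | r < ‖z‖}, (u (x + z) - u x + (v (y + z) - v y)) ∂ν :=
        (integral_add hu_int hv_int).symm
    _ ≤ ∫ z in {z | r < ‖z‖}, η * (logWeight (x + z) - logWeight x) ∂ν :=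
        setIntegral_mono (hu_int.add hv_int)
          ((integrableOn_logWeight_increment ν hr x).const_mul η) fun z => by
            linarith [huv z]
    _ = η * farLevy ν logWeight r x := integral_const_mul _ _
    _ ≤ η * weightConst ν := mul_le_mul_of_nonneg_left (farLevy_logWeight_le ν hr hr1 x) hη

end WeightBound

/-! ### Viscosity solutions -/

/-- Continuous, locally in time bounded viscosity subsolutions of `∂_t w = I[w] + f(t, x, w)` for
the Lévy operator `I` of `ν`, without reference to an initial datum. Test functions touch `w` from
above on a cylinder whose radius also splits `I` into its near and far parts. -/
structure IsViscositySub {E : Type*} [NormedAddCommGroup E] [NormedSpace ℝ E] [MeasurableSpace E]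
    (ν : Measure E) (f : ℝ → E → ℝ → ℝ) (w : ℝ → E → ℝ) : Prop where
  continuousOn : ContinuousOn (fun q : ℝ × E => w q.1 q.2) (Ici 0 ×ˢ univ)
  bounded : ∀ T, ∃ M, ∀ t ∈ Icc (0 : ℝ) T, ∀ x, |w t x| ≤ M
  deriv_le : ∀ (t₀ : ℝ) (x₀ : E), 0 < t₀ → ∀ φ : ℝ → E → ℝ,
    ContDiff ℝ 2 (fun q : ℝ × E => φ q.1 q.2) → ∀ τ r : ℝ, 0 < τ → τ < t₀ → 0 < r →
    (∀ t ∈ Ioo (t₀ - τ) (t₀ + τ), ∀ x ∈ ball x₀ r, w t x - φ t x ≤ w t₀ x₀ - φ t₀ x₀) →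
    deriv (fun t => φ t x₀) t₀
      ≤ nearLevy ν (φ t₀) r x₀ + farLevy ν (w t₀) r x₀ + f t₀ x₀ (w t₀ x₀)

/-- Viscosity supersolutions, encoded by negation: `-w` is a subsolution of the equation that
`-w` formally satisfies. -/
def IsViscositySuper {E : Type*} [NormedAddCommGroup E] [NormedSpace ℝ E] [MeasurableSpace E]
    (ν : Measure E) (f : ℝ → E → ℝ → ℝ) (w : ℝ → E → ℝ) : Prop :=
  IsViscositySub ν (fun t x v => -f t x (-v)) (fun t x => -w t x)

/-- Viscosity solutions of `∂_t w = I[w] + f(t, x, w)`. -/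
structure IsViscositySol {E : Type*} [NormedAddCommGroup E] [NormedSpace ℝ E] [MeasurableSpace E]
    (ν : Measure E) (f : ℝ → E → ℝ → ℝ) (w : ℝ → E → ℝ) : Prop where
  sub : IsViscositySub ν f w
  super : IsViscositySuper ν f w

section Viscosity

variable {E : Type*} [NormedAddCommGroup E] [NormedSpace ℝ E] [MeasurableSpace E]
  {ν : Measure E} {f : ℝ → E → ℝ → ℝ} {w : ℝ → E → ℝ}

namespace IsViscositySub

lemma continuous_slice (h : IsViscositySub ν f w) {t : ℝ} (ht : 0 ≤ t) : Continuous (w t) :=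
  continuousOn_univ.1 <|
    h.continuousOn.comp (f := fun x : E => (t, x)) (by fun_prop) fun _ _ => ⟨ht, mem_univ _⟩

-- Testing with a separated function on a whole time slab, where the radius `r` is free.
lemma deriv_le_of_forall_le (h : IsViscositySub ν f w) {S t₀ : ℝ} (ht₀ : t₀ ∈ Ioo 0 S) {x₀ : E}
    {θ : ℝ → ℝ} (hθ : ContDiff ℝ 2 θ) {φ : E → ℝ} (hφ : ContDiff ℝ 2 φ)
    (hmax : ∀ t ∈ Ioo 0 S, ∀ x, w t x - (θ t + φ x) ≤ w t₀ x₀ - (θ t₀ + φ x₀))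
    {r : ℝ} (hr : 0 < r) :
    deriv θ t₀ ≤ nearLevy ν φ r x₀ + farLevy ν (w t₀) r x₀ + f t₀ x₀ (w t₀ x₀) := by
  have h_test := h.deriv_le t₀ x₀ ht₀.1 (fun t x => θ t + φ x) (by fun_prop)
    (min (t₀ / 2) (S - t₀)) r (lt_min (half_pos ht₀.1) (sub_pos.2 ht₀.2))
    ((min_le_left _ _).trans_lt (half_lt_self ht₀.1)) hr fun t ht x _ => by
      have h_left := min_le_left (t₀ / 2) (S - t₀)
      have h_right := min_le_right (t₀ / 2) (S - t₀)
      exact hmax t ⟨by linarith [ht.1, ht₀.1], by linarith [ht.2]⟩ x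
  simpa only [deriv_add_const, add_comm (θ t₀), nearLevy_add_const] using h_test

lemma comp_add (h : IsViscositySub ν f w) {T : ℝ} (hT : 0 ≤ T) (k : E) (c : ℝ) :
    IsViscositySub ν (fun t x v => f (t + T) (x + k) (v - c))
      (fun t x => w (t + T) (x + k) + c) where
  continuousOn := by
    refine ContinuousOn.add ?_ continuousOn_const
    exact h.continuousOn.comp (f := fun q : ℝ × E => (q.1 + T, q.2 + k)) (by fun_prop)
      fun q hq => ⟨add_nonneg hq.1 hT, mem_univ _⟩
  bounded S := by
    obtain ⟨M, hM⟩ := h.bounded (S + T)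
    refine ⟨M + |c|, fun t ht x => (abs_add_le _ _).trans (add_le_add_left ?_ _)⟩
    exact hM _ ⟨add_nonneg ht.1 hT, add_le_add_left ht.2 T⟩ _
  deriv_le t₀ x₀ _ φ hφ τ r hτ hτt hr hmax := by
    have h_test := h.deriv_le (t₀ + T) (x₀ + k) (by linarith) (fun t x => φ (t - T) (x + -k))
      (hφ.comp (f := fun q : ℝ × E => (q.1 - T, q.2 + -k)) (by fun_prop)) τ r hτ
      (by linarith) hr fun t ht x hx => ?_
    · rw [deriv_comp_sub_const (f := fun t => φ t (x₀ + k + -k)),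
        nearLevy_comp_add_right ν (φ (t₀ + T - T)) (-k)] at h_test
      simpa only [add_sub_cancel_right, add_neg_cancel_right, farLevy_add_const,
        farLevy_comp_add_right] using h_test
    · have h_ball : x + -k ∈ ball x₀ r := by
        rwa [mem_ball, dist_eq_norm, ← sub_eq_add_neg, sub_right_comm, sub_sub, ← dist_eq_norm]
      have h_max := hmax (t - T) ⟨by linarith [ht.1], by linarith [ht.2]⟩ (x + -k) h_ball
      simp only [sub_add_cancel, neg_add_cancel_right] at h_max
      simp only [add_sub_cancel_right, add_neg_cancel_right]
      linarith

lemma comp_neg [BorelSpace E] [ν.IsNegInvariant] (h : IsViscositySub ν f w) :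
    IsViscositySub ν (fun t x => f t (-x)) (fun t x => w t (-x)) where
  continuousOn := h.continuousOn.comp (f := fun q : ℝ × E => (q.1, -q.2)) (by fun_prop)
    fun _ hq => ⟨hq.1, mem_univ _⟩
  bounded S := (h.bounded S).imp fun _ hM t ht x => hM t ht (-x)
  deriv_le t₀ x₀ ht₀ φ hφ τ r hτ hτt hr hmax := by
    have h_test := h.deriv_le t₀ (-x₀) ht₀ (fun t x => φ t (-x))
      (hφ.comp (f := fun q : ℝ × E => (q.1, -q.2)) (by fun_prop)) τ r hτ hτt hr
      fun t ht x hx => ?_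
    · simpa only [nearLevy_comp_neg, farLevy_comp_neg, neg_neg] using h_test
    · have h_ball : -x ∈ ball x₀ r := by
        rwa [mem_ball, ← dist_neg_neg, neg_neg]
      simpa only [neg_neg] using hmax t ht (-x) h_ball

-- Multiplication by `exp (-B t)` produces the zeroth order term `-B v`, which makes a Lipschitz
-- right-hand side strictly decreasing in `v`.
lemma exp_mul (h : IsViscositySub ν f w) (B : ℝ) :
    IsViscositySub ν (fun t x v => Real.exp (-(B * t)) * f t x (Real.exp (B * t) * v) - B * v)
      (fun t x => Real.exp (-(B * t)) * w t x) where
  continuousOn := ContinuousOn.mul (by fun_prop) h.continuousOn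
  bounded T := by
    obtain ⟨M, hM⟩ := h.bounded T
    refine ⟨Real.exp (|B| * T) * M, fun t ht x => ?_⟩
    rw [abs_mul, Real.abs_exp]
    gcongr
    · calc -(B * t) ≤ |B| * t := by
            rw [← neg_mul]; exact mul_le_mul_of_nonneg_right (neg_le_abs B) ht.1
        _ ≤ |B| * T := mul_le_mul_of_nonneg_left ht.2 (abs_nonneg B)
    · exact hM t ht x
  deriv_le t₀ x₀ ht₀ φ hφ τ r hτ hτt hr hmax := by
    have h_cancel (t : ℝ) : Real.exp (B * t) * Real.exp (-(B * t)) = 1 := by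
      rw [← Real.exp_add, add_neg_cancel, Real.exp_zero]
    set m := Real.exp (-(B * t₀)) * w t₀ x₀ - φ t₀ x₀
    have h_contact : φ t₀ x₀ + m = Real.exp (-(B * t₀)) * w t₀ x₀ := add_sub_cancel _ _
    have h_test := h.deriv_le t₀ x₀ ht₀ (fun t x => Real.exp (B * t) * (φ t x + m))
      (by fun_prop) τ r hτ hτt hr fun t ht x hx => ?_
    · have hφ_t : HasDerivAt (fun t => φ t x₀) (deriv (fun t => φ t x₀) t₀) t₀ :=
        ((hφ.comp (f := fun t : ℝ => (t, x₀)) (by fun_prop)).differentiable two_ne_zero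
          t₀).hasDerivAt
      have h_deriv := (((hasDerivAt_id t₀).const_mul B).exp.mul (hφ_t.add_const m)).deriv
      simp only [Pi.mul_def, id_eq, mul_one, h_contact] at h_deriv
      rw [h_deriv, nearLevy_const_mul, nearLevy_add_const] at h_test
      have h_scaled := mul_le_mul_of_nonneg_left h_test (Real.exp_pos (-(B * t₀))).le
      have h_arg : Real.exp (B * t₀) * (Real.exp (-(B * t₀)) * w t₀ x₀) = w t₀ x₀ := by
        rw [← mul_assoc, h_cancel, one_mul]
      rw [farLevy_const_mul, h_arg]
      linear_combination h_scaled + (nearLevy ν (φ t₀) r x₀ - deriv (fun t => φ t x₀) t₀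
        - B * (Real.exp (-(B * t₀)) * w t₀ x₀)) * h_cancel t₀
    · have h_max := mul_le_mul_of_nonneg_left (sub_le_iff_le_add'.1 (hmax t ht x hx))
        (Real.exp_pos (B * t)).le
      rw [← mul_assoc, h_cancel, one_mul] at h_max
      rw [h_contact, ← mul_assoc, h_cancel, one_mul]
      linarith

end IsViscositySub

-- The test cylinder is open while the near part integrates over a closed ball, hence the closure.
lemma isViscositySub_const_mul [BorelSpace E] {c : ℝ} (hf : ∀ t x v, c ≤ f t x v) :
    IsViscositySub ν f (fun t _ => c * t) where
  continuousOn := by fun_prop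
  bounded T := ⟨|c| * T, fun t ht _ => by
    rw [abs_mul, abs_of_nonneg ht.1]
    exact mul_le_mul_of_nonneg_left ht.2 (abs_nonneg c)⟩
  deriv_le t₀ x₀ _ φ hφ τ r hτ _ hr hmax := by
    have h_deriv : deriv (fun t => φ t x₀) t₀ = c := by
      have hφ_t : DifferentiableAt ℝ (fun t => φ t x₀) t₀ :=
        (hφ.comp (f := fun t : ℝ => (t, x₀)) (by fun_prop)).differentiable two_ne_zero t₀
      have h_max : IsLocalMax (fun t => c * t - φ t x₀) t₀ := by
        filter_upwards [Ioo_mem_nhds (sub_lt_self t₀ hτ) (lt_add_of_pos_right t₀ hτ)] with t ht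
        exact hmax t ht x₀ (mem_ball_self hr)
      have h_crit := h_max.hasDerivAt_eq_zero
        (((hasDerivAt_id t₀).const_mul c).sub hφ_t.hasDerivAt)
      linarith
    have h_ball : ∀ x ∈ ball x₀ r, φ t₀ x₀ ≤ φ t₀ x := fun x hx => by
      linarith [hmax t₀ ⟨sub_lt_self t₀ hτ, lt_add_of_pos_right t₀ hτ⟩ x hx]
    have h_fderiv : fderiv ℝ (φ t₀) x₀ = 0 :=
      IsLocalMin.fderiv_eq_zero (mem_of_superset (ball_mem_nhds x₀ hr) h_ball)
    have h_closedBall : ∀ x ∈ closedBall x₀ r, φ t₀ x₀ ≤ φ t₀ x := by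
      rw [← closure_ball x₀ hr.ne']
      exact fun x hx => closure_minimal h_ball (isClosed_le continuous_const
        (hφ.continuous.comp (by fun_prop : Continuous fun x : E => (t₀, x)))) hx
    have h_near : 0 ≤ nearLevy ν (φ t₀) r x₀ := by
      refine setIntegral_nonneg (measurableSet_norm_le r) fun z (hz : ‖z‖ ≤ r) => ?_
      rw [h_fderiv, zero_apply, sub_zero, sub_nonneg]
      exact h_closedBall _ (by rwa [mem_closedBall, dist_self_add_left])
    have h_far : farLevy ν (fun _ => c * t₀) r x₀ = 0 := by
      simp only [farLevy, sub_self, integral_zero]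
    rw [h_deriv, h_far]
    linarith [hf t₀ x₀ (c * t₀)]

namespace IsViscositySol

lemma neg (h : IsViscositySol ν f w) :
    IsViscositySol ν (fun t x v => -f t x (-v)) (fun t x => -w t x) where
  sub := h.super
  super := by simpa only [IsViscositySuper, neg_neg] using h.sub

lemma comp_add (h : IsViscositySol ν f w) {T : ℝ} (hT : 0 ≤ T) (k : E) (c : ℝ) :
    IsViscositySol ν (fun t x v => f (t + T) (x + k) (v - c))
      (fun t x => w (t + T) (x + k) + c) where
  sub := h.sub.comp_add hT k c
  super := by
    simpa only [IsViscositySuper, sub_neg_eq_add, neg_add', ← sub_eq_add_neg] using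
      IsViscositySub.comp_add h.super hT k (-c)

lemma comp_neg [BorelSpace E] [ν.IsNegInvariant] (h : IsViscositySol ν f w) :
    IsViscositySol ν (fun t x => f t (-x)) (fun t x => w t (-x)) where
  sub := h.sub.comp_neg
  super := IsViscositySub.comp_neg h.super

end IsViscositySol

end Viscosity

/-! ### Doubling of variables -/

/-- The function maximised when doubling the variables: `ψ` confines the space variable, `χ`
excludes the final time and `n` forces the two points together. -/
def doubled {E : Type*} [NormedAddCommGroup E] (a b : ℝ → E → ℝ) (ψ : E → ℝ) (χ : ℝ → ℝ) (n : ℝ)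
    (t : ℝ) (x : E) (τ : ℝ) (y : E) : ℝ :=
  a t x + b τ y - n * (‖x - y‖ ^ 2 + (t - τ) ^ 2) - ψ x - χ t - χ τ

/-- The standing assumptions of the doubling argument for functions `a, b ≤ M` on the times
`[0, S]`: the penalty `ψ` exceeds `2M` outside the ball of radius `R`, and `χ` does so at time
`S`. -/
structure IsDoublingPenalty {E : Type*} [NormedAddCommGroup E] (a b : ℝ → E → ℝ) (ψ : E → ℝ)
    (χ : ℝ → ℝ) (S M R : ℝ) : Prop where
  continuousOn_left : ContinuousOn (fun q : ℝ × E => a q.1 q.2) (Icc 0 S ×ˢ univ)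
  continuousOn_right : ContinuousOn (fun q : ℝ × E => b q.1 q.2) (Icc 0 S ×ˢ univ)
  left_le : ∀ t ∈ Icc 0 S, ∀ x, a t x ≤ M
  right_le : ∀ t ∈ Icc 0 S, ∀ x, b t x ≤ M
  continuous_space : Continuous ψ
  space_nonneg : ∀ x, 0 ≤ ψ x
  space_coercive : ∀ x, ψ x ≤ 2 * M → ‖x‖ ≤ R
  continuous_time : Continuous χ
  time_nonneg : ∀ t, 0 ≤ χ t
  lt_time : 2 * M < χ S

namespace IsDoublingPenalty

variable {E : Type*} [NormedAddCommGroup E] {a b : ℝ → E → ℝ} {ψ : E → ℝ} {χ : ℝ → ℝ}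
  {S M R n e : ℝ}

lemma localized (h : IsDoublingPenalty a b ψ χ S M R) (hn : 0 ≤ n) (he : 0 ≤ e)
    (hne : 2 * M < n * e ^ 2) {t τ : ℝ} (ht : t ∈ Icc 0 S) (hτ : τ ∈ Icc 0 S) {x y : E}
    (h_pos : 0 ≤ doubled a b ψ χ n t x τ y) :
    ‖x‖ ≤ R ∧ ‖x - y‖ ≤ e ∧ |t - τ| ≤ e ∧ t < S ∧ τ < S := by
  have h_space : 0 ≤ n * ‖x - y‖ ^ 2 := by positivity
  have h_time : 0 ≤ n * (t - τ) ^ 2 := by positivity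
  unfold doubled at h_pos
  rw [mul_add] at h_pos
  have ha := h.left_le t ht x
  have hb := h.right_le τ hτ y
  have hψx := h.space_nonneg x
  have hχt := h.time_nonneg t
  have hχτ := h.time_nonneg τ
  have hχS := h.lt_time
  have h_norm : ‖x - y‖ ^ 2 ≤ e ^ 2 := (lt_of_mul_lt_mul_left (by linarith) hn).le
  have h_abs : (t - τ) ^ 2 ≤ e ^ 2 := (lt_of_mul_lt_mul_left (by linarith) hn).le
  refine ⟨h.space_coercive x (by linarith), (sq_le_sq₀ (norm_nonneg _) he).1 h_norm,
    abs_le_of_sq_le_sq h_abs he, lt_of_le_of_ne ht.2 ?_, lt_of_le_of_ne hτ.2 ?_⟩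
  · rintro rfl
    linarith
  · rintro rfl
    linarith

lemma continuousOn_doubled (h : IsDoublingPenalty a b ψ χ S M R) (n : ℝ) :
    ContinuousOn (fun q : (ℝ × E) × ℝ × E => doubled a b ψ χ n q.1.1 q.1.2 q.2.1 q.2.2)
      ((Icc 0 S ×ˢ univ) ×ˢ (Icc 0 S ×ˢ univ)) := by
  have ha : ContinuousOn (fun q : (ℝ × E) × ℝ × E => a q.1.1 q.1.2)
      ((Icc 0 S ×ˢ univ) ×ˢ (Icc 0 S ×ˢ univ)) :=
    h.continuousOn_left.comp continuousOn_fst fun _ hq => hq.1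
  have hb : ContinuousOn (fun q : (ℝ × E) × ℝ × E => b q.2.1 q.2.2)
      ((Icc 0 S ×ˢ univ) ×ˢ (Icc 0 S ×ˢ univ)) :=
    h.continuousOn_right.comp continuousOn_snd fun _ hq => hq.2
  have hψ := h.continuous_space
  have hχ := h.continuous_time
  have h_pen : Continuous fun q : (ℝ × E) × ℝ × E =>
      n * (‖q.1.2 - q.2.2‖ ^ 2 + (q.1.1 - q.2.1) ^ 2) + ψ q.1.2 + χ q.1.1 + χ q.2.1 := by fun_prop
  simp only [doubled, sub_sub]
  exact (ha.add hb).sub h_pen.continuousOn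

lemma exists_forall_doubled_le [ProperSpace E] (h : IsDoublingPenalty a b ψ χ S M R) (hn : 0 ≤ n)
    (he : 0 ≤ e) (hne : 2 * M < n * e ^ 2) {T : ℝ} (hT : T ∈ Icc 0 S) {z : E}
    (hz : 0 ≤ doubled a b ψ χ n T z T z) :
    ∃ t ∈ Icc 0 S, ∃ τ ∈ Icc 0 S, ∃ x y, ∀ t' ∈ Icc 0 S, ∀ τ' ∈ Icc 0 S, ∀ x' y',
      doubled a b ψ χ n t' x' τ' y' ≤ doubled a b ψ χ n t x τ y := by
  set Q : Set (ℝ × E) := Icc 0 S ×ˢ closedBall 0 (R + e)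
  have hQ : IsCompact Q := isCompact_Icc.prod (isCompact_closedBall _ _)
  have hQ_sub : Q ⊆ Icc 0 S ×ˢ univ := prod_mono_right (subset_univ _)
  have h_mem {t τ : ℝ} {x y : E} (ht : t ∈ Icc 0 S) (hτ : τ ∈ Icc 0 S)
      (h_pos : 0 ≤ doubled a b ψ χ n t x τ y) : ((t, x), (τ, y)) ∈ Q ×ˢ Q := by
    obtain ⟨hx, hxy, -⟩ := h.localized hn he hne ht hτ h_pos
    have hy := norm_le_norm_add_norm_sub x y
    refine ⟨⟨ht, ?_⟩, hτ, ?_⟩ <;> rw [mem_closedBall_zero_iff] <;> linarith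
  obtain ⟨⟨⟨t, x⟩, τ, y⟩, ⟨⟨ht, -⟩, hτ, -⟩, h_max⟩ := (hQ.prod hQ).exists_isMaxOn
    ⟨_, h_mem hT hT hz⟩ ((h.continuousOn_doubled n).mono (prod_mono hQ_sub hQ_sub))
  refine ⟨t, ht, τ, hτ, x, y, fun t' ht' τ' hτ' x' y' => ?_⟩
  by_cases h_sign : 0 ≤ doubled a b ψ χ n t' x' τ' y'
  · exact h_max (h_mem ht' hτ' h_sign)
  · exact (not_le.1 h_sign).le.trans (hz.trans (h_max (h_mem hT hT hz)))

lemma exists_close_forall_doubled_le [ProperSpace E] (h : IsDoublingPenalty a b ψ χ S M R)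
    {γ : ℝ} (hγ : 0 ≤ γ) {T : ℝ} (hT : T ∈ Icc 0 S) {z : E}
    (hz : γ ≤ a T z + b T z - ψ z - χ T - χ T) (he : 0 < e) :
    ∃ n ≥ 0, ∃ t ∈ Ico 0 S, ∃ τ ∈ Ico 0 S, ∃ x y : E, ‖x‖ ≤ R ∧ ‖x - y‖ ≤ e ∧ |t - τ| ≤ e ∧
      γ + ψ x ≤ a t x + b τ y ∧ ∀ t' ∈ Icc 0 S, ∀ τ' ∈ Icc 0 S, ∀ x' y',
        doubled a b ψ χ n t' x' τ' y' ≤ doubled a b ψ χ n t x τ y := by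
  obtain ⟨n, hn, hne⟩ : ∃ n ≥ 0, 2 * M < n * e ^ 2 :=
    ⟨(2 * |M| + 1) / e ^ 2, by positivity, by
      rw [div_mul_cancel₀ _ (by positivity)]; linarith [le_abs_self M]⟩
  have hz_doubled : γ ≤ doubled a b ψ χ n T z T z := by
    simpa only [doubled, sub_self, norm_zero, ne_eq, OfNat.ofNat_ne_zero, not_false_eq_true,
      zero_pow, add_zero, mul_zero, sub_zero] using hz
  obtain ⟨t, ht, τ, hτ, x, y, h_max⟩ :=
    h.exists_forall_doubled_le hn he.le hne hT (hγ.trans hz_doubled)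
  have h_val : γ ≤ doubled a b ψ χ n t x τ y := hz_doubled.trans (h_max T hT T hT z z)
  obtain ⟨hx, hxy, htτ, htS, hτS⟩ := h.localized hn he.le hne ht hτ (hγ.trans h_val)
  refine ⟨n, hn, t, ⟨ht.1, htS⟩, τ, ⟨hτ.1, hτS⟩, x, y, hx, hxy, htτ, ?_, h_max⟩
  have h_near : 0 ≤ n * (‖x - y‖ ^ 2 + (t - τ) ^ 2) := by positivity
  unfold doubled at h_val
  linarith [h.time_nonneg t, h.time_nonneg τ]

-- The two points are taken so close that `a + b ≤ 0` at time `0` keeps them away from that time.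
lemma exists_interior_forall_doubled_le [ProperSpace E] (h : IsDoublingPenalty a b ψ χ S M R)
    (h_init : ∀ x, a 0 x + b 0 x ≤ 0) {γ : ℝ} (hγ : 0 < γ) {T : ℝ} (hT : T ∈ Icc 0 S) {z : E}
    (hz : γ ≤ a T z + b T z - ψ z - χ T - χ T) {d : ℝ} (hd : 0 < d) :
    ∃ n ≥ 0, ∃ t ∈ Ioo 0 S, ∃ τ ∈ Ioo 0 S, ∃ x y : E, ‖x - y‖ ≤ d ∧ |t - τ| ≤ d ∧
      γ + ψ x ≤ a t x + b τ y ∧ ∀ t' ∈ Icc 0 S, ∀ τ' ∈ Icc 0 S, ∀ x' y',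
        doubled a b ψ χ n t' x' τ' y' ≤ doubled a b ψ χ n t x τ y := by
  set Q : Set (ℝ × E) := Icc 0 S ×ˢ closedBall 0 (R + d)
  have hQ : IsCompact Q := isCompact_Icc.prod (isCompact_closedBall _ _)
  have hQ_sub : Q ⊆ Icc 0 S ×ˢ univ := prod_mono_right (subset_univ _)
  obtain ⟨δa, hδa, ha⟩ := uniformContinuousOn_iff_le.1
    (hQ.uniformContinuousOn_of_continuous (h.continuousOn_left.mono hQ_sub)) (γ / 2) (half_pos hγ)
  obtain ⟨δb, hδb, hb⟩ := uniformContinuousOn_iff_le.1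
    (hQ.uniformContinuousOn_of_continuous (h.continuousOn_right.mono hQ_sub)) (γ / 2) (half_pos hγ)
  obtain ⟨n, hn, t, ht, τ, hτ, x, y, hxR, hxy, htτ, h_val, h_max⟩ :=
    h.exists_close_forall_doubled_le hγ.le hT hz (lt_min hd (lt_min hδa hδb))
  simp only [le_min_iff] at hxy htτ
  have hx : x ∈ closedBall (0 : E) (R + d) := by rw [mem_closedBall_zero_iff]; linarith
  have hy : y ∈ closedBall (0 : E) (R + d) := by
    rw [mem_closedBall_zero_iff]; linarith [norm_le_norm_add_norm_sub x y]
  have h_zero : (0 : ℝ) ∈ Icc 0 S := ⟨le_rfl, hT.1.trans hT.2⟩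
  have hψ := h.space_nonneg x
  have ht_pos : 0 < t := lt_of_le_of_ne ht.1 <| by
    rintro rfl
    have := hb (0, x) ⟨h_zero, hx⟩ (τ, y) ⟨Ico_subset_Icc_self hτ, hy⟩ <| by
      rw [Prod.dist_eq, max_le_iff, Real.dist_eq, dist_eq_norm]
      exact ⟨htτ.2.2, hxy.2.2⟩
    linarith [h_init x, (abs_le.1 this).1]
  have hτ_pos : 0 < τ := lt_of_le_of_ne hτ.1 <| by
    rintro rfl
    have := ha (t, x) ⟨Ico_subset_Icc_self ht, hx⟩ (0, y) ⟨h_zero, hy⟩ <| by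
      rw [Prod.dist_eq, max_le_iff, Real.dist_eq, dist_eq_norm]
      exact ⟨htτ.2.1, hxy.2.1⟩
    linarith [h_init y, (abs_le.1 this).2]
  exact ⟨n, hn, t, ⟨ht_pos, ht.2⟩, τ, ⟨hτ_pos, hτ.2⟩, x, y, hxy.1, htτ.1, h_val, h_max⟩

end IsDoublingPenalty

lemma exists_contDiff_time_penalty {δ : ℝ} (hδ : 0 < δ) (T C : ℝ) :
    ∃ χ : ℝ → ℝ, ContDiff ℝ 2 χ ∧ (∀ t, 0 ≤ χ t) ∧ (∀ t, 0 ≤ deriv χ t) ∧ χ T = δ ∧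
      C < χ (T + 1) := by
  set k := |C| / δ
  refine ⟨fun t => δ * Real.exp (k * (t - T)), by fun_prop, fun t => by positivity, fun t => ?_,
    by simp only [sub_self, mul_zero, Real.exp_zero, mul_one], ?_⟩
  · exact Monotone.deriv_nonneg (fun s t hst => by gcongr)
  · calc C ≤ δ * k := by rw [mul_div_cancel₀ _ hδ.ne']; exact le_abs_self C
      _ < δ * (k + 1) := by linarith
      _ ≤ δ * Real.exp (k * (T + 1 - T)) := by
        rw [add_sub_cancel_left, mul_one]
        gcongr
        exact Real.add_one_le_exp k

/-! ### Comparison principle -/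

section Comparison

variable {E : Type*} [NormedAddCommGroup E] [InnerProductSpace ℝ E]

lemma norm_sq_add_logWeight_increment_le {n η : ℝ} (hη : 0 ≤ η) (x y z : E) :
    (n * ‖x + z - y‖ ^ 2 + η * logWeight (x + z)) - (n * ‖x - y‖ ^ 2 + η * logWeight x)
      - fderiv ℝ (fun x => n * ‖x - y‖ ^ 2 + η * logWeight x) x z ≤ (n + η) * ‖z‖ ^ 2 := by
  have h_sq : HasFDerivAt (fun x => n * ‖x - y‖ ^ 2) _ x :=
    ((hasFDerivAt_id x).sub_const y).norm_sq.const_mul n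
  have h_weight :=
    ((contDiff_logWeight.differentiable two_ne_zero x).hasFDerivAt (𝕜 := ℝ)).const_mul η
  have h_fderiv : fderiv ℝ (fun x => n * ‖x - y‖ ^ 2 + η * logWeight x) x z
      = n * (2 * ⟪x - y, z⟫) + η * fderiv ℝ logWeight x z := by
    rw [(h_sq.fun_add h_weight).fderiv]
    simp [inner_sub_left]
  have h_log := mul_le_mul_of_nonneg_left (logWeight_add_sub_sub_fderiv_le x z) hη
  rw [h_fderiv, add_sub_right_comm x z y, norm_add_sq_real]
  linarith

variable [MeasurableSpace E] {ν : Measure E}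
  {f₁ f₂ : ℝ → E → ℝ → ℝ} {w₁ w₂ : ℝ → E → ℝ}

section Contact

variable [IsSymmLevyMeasure ν] {χ : ℝ → ℝ} {n η S t τ r : ℝ} {x y : E}

lemma IsViscositySub.le_of_forall_penalized_le (h : IsViscositySub ν f₁ w₁)
    (hχ : ContDiff ℝ 2 χ) (hn : 0 ≤ n) (hη : 0 ≤ η) (ht : t ∈ Ioo 0 S)
    (h_max : ∀ t' ∈ Ioo 0 S, ∀ x',
      w₁ t' x' - n * (‖x' - y‖ ^ 2 + (t' - τ) ^ 2) - η * logWeight x' - χ t'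
        ≤ w₁ t x - n * (‖x - y‖ ^ 2 + (t - τ) ^ 2) - η * logWeight x - χ t)
    (hr : 0 < r) (hr1 : r ≤ 1) :
    n * (2 * (t - τ)) + deriv χ t
      ≤ (n + η) * ∫ z in {z | ‖z‖ ≤ r}, ‖z‖ ^ 2 ∂ν + farLevy ν (w₁ t) r x + f₁ t x (w₁ t x) := by
  have h_test := h.deriv_le_of_forall_le ht (θ := fun t => n * (t - τ) ^ 2 + χ t) (by fun_prop)
    (φ := fun x => n * ‖x - y‖ ^ 2 + η * logWeight x)
    ((contDiff_const.mul ((contDiff_id.sub contDiff_const).norm_sq ℝ)).add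
      (contDiff_const.mul contDiff_logWeight))
    (fun t' ht' x' => by linarith [h_max t' ht' x']) hr
  have h_deriv : deriv (fun t => n * (t - τ) ^ 2 + χ t) t = n * (2 * (t - τ)) + deriv χ t := by
    have h_sq := (((hasDerivAt_id t).sub_const τ).pow 2).const_mul n
    simpa using (h_sq.fun_add (hχ.differentiable two_ne_zero t).hasDerivAt).deriv
  have h_near := nearLevy_le ν (φ := fun x => n * ‖x - y‖ ^ 2 + η * logWeight x)
    (add_nonneg hn hη) hr1 (norm_sq_add_logWeight_increment_le hη x y)
  rw [h_deriv] at h_test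
  linarith

-- At a maximum of the doubled function the two far parts are compared jump by jump, and the time
-- derivatives of the coupling penalty cancel.
lemma nonneg_of_forall_doubled_le [BorelSpace E] (h₁ : IsViscositySub ν f₁ w₁)
    (h₂ : IsViscositySuper ν f₂ w₂)
    (hχ : ContDiff ℝ 2 χ) (hχ_mono : ∀ t, 0 ≤ deriv χ t) (hn : 0 ≤ n) (hη : 0 ≤ η)
    (ht : t ∈ Ioo 0 S) (hτ : τ ∈ Ioo 0 S)
    (h_max : ∀ t' ∈ Icc 0 S, ∀ τ' ∈ Icc 0 S, ∀ x' y',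
      doubled w₁ (fun t x => -w₂ t x) (fun x => η * logWeight x) χ n t' x' τ' y'
        ≤ doubled w₁ (fun t x => -w₂ t x) (fun x => η * logWeight x) χ n t x τ y)
    (hr : 0 < r) (hr1 : r ≤ 1) :
    0 ≤ (2 * n + η) * ∫ z in {z | ‖z‖ ≤ r}, ‖z‖ ^ 2 ∂ν + η * weightConst ν
      + (f₁ t x (w₁ t x) - f₂ τ y (w₂ τ y)) := by
  unfold doubled at h_max
  have ht' := Ioo_subset_Icc_self ht
  have hτ' := Ioo_subset_Icc_self hτ
  have h_left := h₁.le_of_forall_penalized_le (y := y) (τ := τ) hχ hn hη ht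
    (fun t' ht₁ x' => by linarith [h_max t' (Ioo_subset_Icc_self ht₁) τ hτ' x' y]) hr hr1
  have h_right := IsViscositySub.le_of_forall_penalized_le (y := x) (τ := t) h₂ hχ hn le_rfl hτ
    (fun τ' hτ₁ y' => by
      have := h_max t ht' τ' (Ioo_subset_Icc_self hτ₁) x y'
      rw [norm_sub_rev y' x, norm_sub_rev y x, sub_sq_comm τ' t, sub_sq_comm τ t]
      linarith) hr hr1
  obtain ⟨M₁, hM₁⟩ := h₁.bounded S
  obtain ⟨M₂, hM₂⟩ := IsViscositySub.bounded h₂ S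
  have h_far : farLevy ν (w₁ t) r x + farLevy ν (fun x => -w₂ τ x) r y ≤ η * weightConst ν :=
    farLevy_add_le ν (h₁.continuous_slice ht.1.le)
      (IsViscositySub.continuous_slice h₂ hτ.1.le) (hM₁ t ht') (hM₂ τ hτ') hr hr1 hη fun z => by
        have := h_max t ht' τ hτ' (x + z) (y + z)
        rw [add_sub_add_right_eq_sub] at this
        linarith
  rw [neg_neg] at h_right
  linarith [hχ_mono t, hχ_mono τ]

end Contact

lemma exists_isDoublingPenalty (h₁ : IsViscositySub ν f₁ w₁) (h₂ : IsViscositySuper ν f₂ w₂)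
    {η δ : ℝ} (hη : 0 < η) (hδ : 0 < δ) (T : ℝ) :
    ∃ χ M R, ContDiff ℝ 2 χ ∧ (∀ t, 0 ≤ deriv χ t) ∧ χ T = δ ∧
      IsDoublingPenalty w₁ (fun t x => -w₂ t x) (fun x => η * logWeight x) χ (T + 1) M R := by
  obtain ⟨M₁, hM₁⟩ := h₁.bounded (T + 1)
  obtain ⟨M₂, hM₂⟩ := IsViscositySub.bounded h₂ (T + 1)
  set M := max M₁ M₂
  obtain ⟨R, -, hR⟩ := exists_forall_lt_norm_imp_lt_logWeight (E := E) (2 * M / η)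
  obtain ⟨χ, hχ, hχ_nonneg, hχ_mono, hχT, hχ_end⟩ := exists_contDiff_time_penalty hδ T (2 * M)
  have h_slab : Icc 0 (T + 1) ×ˢ (univ : Set E) ⊆ Ici 0 ×ˢ univ :=
    prod_mono_left Icc_subset_Ici_self
  exact ⟨χ, M, R, hχ, hχ_mono, hχT,
    { continuousOn_left := h₁.continuousOn.mono h_slab
      continuousOn_right := (IsViscositySub.continuousOn h₂).mono h_slab
      left_le := fun t ht x => (abs_le.1 (hM₁ t ht x)).2.trans (le_max_left _ _)
      right_le := fun t ht x => (abs_le.1 (hM₂ t ht x)).2.trans (le_max_right _ _)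
      continuous_space := continuous_const.mul continuous_logWeight
      space_nonneg := fun x => mul_nonneg hη.le (logWeight_nonneg x)
      space_coercive := fun x hx => not_lt.1 fun h_norm =>
        hx.not_gt ((div_lt_iff₀' hη).1 (hR x h_norm))
      continuous_time := hχ.continuous
      time_nonneg := hχ_nonneg
      lt_time := hχ_end }⟩

variable [IsSymmLevyMeasure ν] [BorelSpace E] [ProperSpace E]

-- The decay `-(weightConst ν + 1)` in the value absorbs what the Lévy operator does to the weight.
lemma sub_le_mul_logWeight_of_proper (h₁ : IsViscositySub ν f₁ w₁)
    (h₂ : IsViscositySuper ν f₂ w₂) (h_init : ∀ x, w₁ 0 x ≤ w₂ 0 x) {η C T : ℝ} (hη : 0 < η)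
    (hC : 0 ≤ C) (hT : 0 ≤ T)
    (h_proper : ∀ t ∈ Icc 0 (T + 1), ∀ τ ∈ Icc 0 (T + 1), ∀ x y, w₂ τ y ≤ w₁ t x →
      f₁ t x (w₁ t x) - f₂ τ y (w₂ τ y) ≤ -(weightConst ν + 1) * (w₁ t x - w₂ τ y)
        + C * (‖x - y‖ + |t - τ|) + η * logWeight x) (z : E) :
    w₁ T z - w₂ T z ≤ η * logWeight z := by
  by_contra! h_lt
  set γ := (w₁ T z - w₂ T z - η * logWeight z) / 2 with hγ_def
  have hγ : 0 < γ := by linarith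
  obtain ⟨χ, M, R, hχ, hχ_mono, hχT, h_pen⟩ := exists_isDoublingPenalty h₁ h₂ hη (half_pos hγ) T
  obtain ⟨n, hn, t, ht, τ, hτ, x, y, hxy, htτ, h_val, h_max⟩ :=
    h_pen.exists_interior_forall_doubled_le (fun x => by linarith [h_init x]) hγ
      ⟨hT, (lt_add_one T).le⟩ (z := z) (by linarith) (d := γ / (4 * (C + 1))) (by positivity)
  obtain ⟨r, hr, hr1, h_small⟩ := exists_setIntegral_norm_sq_lt ν
    (show 0 < γ / 2 / (2 * n + η) by positivity)
  have h_contact := nonneg_of_forall_doubled_le h₁ h₂ hχ hχ_mono hn hη.le ht hτ h_max hr hr1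
  have h_weight : 0 ≤ η * logWeight x := mul_nonneg hη.le (logWeight_nonneg x)
  have h_rhs := h_proper t (Ioo_subset_Icc_self ht) τ (Ioo_subset_Icc_self hτ) x y (by linarith)
  have h_near : (2 * n + η) * ∫ z in {z | ‖z‖ ≤ r}, ‖z‖ ^ 2 ∂ν < γ / 2 := by
    rwa [← lt_div_iff₀' (by positivity)]
  have h_dist : C * (‖x - y‖ + |t - τ|) ≤ γ / 2 := by
    calc C * (‖x - y‖ + |t - τ|) ≤ (C + 1) * (γ / (4 * (C + 1)) + γ / (4 * (C + 1))) := by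
          gcongr; linarith
      _ = γ / 2 := by field_simp; ring
  have h_decay : (weightConst ν + 1) * (γ + η * logWeight x)
      ≤ (weightConst ν + 1) * (w₁ t x - w₂ τ y) := by
    have := weightConst_nonneg ν
    gcongr
    linarith
  have h_one : η * weightConst ν ≤ weightConst ν * (η * logWeight x) := by
    rw [mul_left_comm]
    exact mul_le_mul_of_nonneg_left (le_mul_of_one_le_right (weightConst_nonneg ν)
      (one_le_logWeight x)) hη.le
  have hγ_scaled := mul_nonneg (weightConst_nonneg ν) hγ.le
  linarith

end Comparison

section Rescaling

lemma abs_exp_neg_mul_sub_exp_neg_mul_le {B t τ : ℝ} (hB : 0 ≤ B) (ht : 0 ≤ t) (hτ : 0 ≤ τ) :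
    |Real.exp (-(B * t)) - Real.exp (-(B * τ))| ≤ B * |t - τ| := by
  wlog h_le : t ≤ τ generalizing t τ
  · rw [abs_sub_comm, abs_sub_comm t]
    exact this hτ ht (le_of_not_ge h_le)
  have h_split : Real.exp (-(B * τ)) = Real.exp (-(B * t)) * Real.exp (-(B * (τ - t))) := by
    rw [← Real.exp_add]
    ring_nf
  have h_one : Real.exp (-(B * t)) ≤ 1 := Real.exp_le_one_iff.2 (neg_nonpos.2 (mul_nonneg hB ht))
  have h_tangent := Real.one_sub_le_exp_neg (B * (τ - t))
  have h_nonneg := mul_nonneg hB (sub_nonneg.2 h_le)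
  have h_mono : Real.exp (-(B * τ)) ≤ Real.exp (-(B * t)) := by gcongr
  rw [abs_of_nonneg (sub_nonneg.2 h_mono), abs_sub_comm, abs_of_nonneg (sub_nonneg.2 h_le), h_split]
  nlinarith [Real.exp_pos (-(B * t))]

lemma exp_neg_mul_mul_abs_sub_le {B M t τ v v' : ℝ} (hB : 0 ≤ B) (ht : 0 ≤ t) (hτ : 0 ≤ τ)
    (hM : |v'| ≤ M) (h_le : Real.exp (-(B * τ)) * v' ≤ Real.exp (-(B * t)) * v) :
    Real.exp (-(B * t)) * |v - v'|
      ≤ Real.exp (-(B * t)) * v - Real.exp (-(B * τ)) * v' + B * |t - τ| * M := by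
  calc Real.exp (-(B * t)) * |v - v'|
      = |(Real.exp (-(B * t)) * v - Real.exp (-(B * τ)) * v')
          - (Real.exp (-(B * t)) - Real.exp (-(B * τ))) * v'| := by
        rw [← abs_of_pos (Real.exp_pos (-(B * t))), ← abs_mul, abs_of_pos (Real.exp_pos _)]
        ring_nf
    _ ≤ Real.exp (-(B * t)) * v - Real.exp (-(B * τ)) * v' + B * |t - τ| * M := by
        refine (abs_sub _ _).trans ?_
        rw [abs_of_nonneg (sub_nonneg.2 h_le), abs_mul]
        gcongr
        exact abs_exp_neg_mul_sub_exp_neg_mul_le hB ht hτ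

variable {E : Type*} [NormedAddCommGroup E] {f : ℝ → E → ℝ → ℝ} {K : NNReal}

lemma sub_le_of_lipschitzWith_uncurry
    (hf : LipschitzWith K (fun q : ℝ × E × ℝ => f q.1 q.2.1 q.2.2)) (t τ : ℝ) (x y : E)
    (v v' : ℝ) : f t x v - f τ y v' ≤ K * (‖x - y‖ + |t - τ| + |v - v'|) := by
  refine (le_abs_self _).trans ((hf.dist_le_mul (t, x, v) (τ, y, v')).trans ?_)
  rw [Prod.dist_eq, Prod.dist_eq, Real.dist_eq, Real.dist_eq, dist_eq_norm]
  gcongr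
  simp only [max_le_iff]
  refine ⟨?_, ?_, ?_⟩ <;> linarith [norm_nonneg (x - y), abs_nonneg (t - τ), abs_nonneg (v - v')]

lemma exp_neg_mul_mul_sub_le_of_lipschitzWith
    (hf : LipschitzWith K (fun q : ℝ × E × ℝ => f q.1 q.2.1 q.2.2)) {D : ℝ}
    (hD : ∀ t x v, |f t x v| ≤ D) {B M t τ v v' : ℝ} (hB : 0 ≤ B) (ht : 0 ≤ t) (hτ : 0 ≤ τ)
    (hM : |v'| ≤ M) (h_le : Real.exp (-(B * τ)) * v' ≤ Real.exp (-(B * t)) * v) (x y : E) :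
    Real.exp (-(B * t)) * f t x v - Real.exp (-(B * τ)) * f τ y v'
      ≤ K * (Real.exp (-(B * t)) * v - Real.exp (-(B * τ)) * v')
        + (K + (K * M + D) * B) * (‖x - y‖ + |t - τ|) := by
  have h_one : Real.exp (-(B * t)) ≤ 1 := Real.exp_le_one_iff.2 (neg_nonpos.2 (mul_nonneg hB ht))
  have h_lip := sub_le_of_lipschitzWith_uncurry hf t τ x y v v'
  have h_val := exp_neg_mul_mul_abs_sub_le hB ht hτ hM h_le
  have h_source : (Real.exp (-(B * t)) - Real.exp (-(B * τ))) * f τ y v' ≤ B * |t - τ| * D := by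
    refine (le_abs_self _).trans ?_
    rw [abs_mul]
    gcongr
    · exact abs_exp_neg_mul_sub_exp_neg_mul_le hB ht hτ
    · exact hD τ y v'
  have h_coef : 0 ≤ (K * M + D) * B := by
    have := (abs_nonneg _).trans (hD t x v)
    have := (abs_nonneg _).trans hM
    positivity
  calc Real.exp (-(B * t)) * f t x v - Real.exp (-(B * τ)) * f τ y v'
      = Real.exp (-(B * t)) * (f t x v - f τ y v')
        + (Real.exp (-(B * t)) - Real.exp (-(B * τ))) * f τ y v' := by ring
    _ ≤ Real.exp (-(B * t)) * (K * (‖x - y‖ + |t - τ| + |v - v'|)) + B * |t - τ| * D := by gcongr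
    _ = K * (Real.exp (-(B * t)) * (‖x - y‖ + |t - τ|) + Real.exp (-(B * t)) * |v - v'|)
        + B * |t - τ| * D := by ring
    _ ≤ K * (1 * (‖x - y‖ + |t - τ|)
          + (Real.exp (-(B * t)) * v - Real.exp (-(B * τ)) * v' + B * |t - τ| * M))
        + B * |t - τ| * D := by gcongr
    _ ≤ K * (Real.exp (-(B * t)) * v - Real.exp (-(B * τ)) * v')
        + (K + (K * M + D) * B) * (‖x - y‖ + |t - τ|) := by
      linarith [mul_nonneg h_coef (norm_nonneg (x - y))]

end Rescaling

section Comparison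

variable {E : Type*} [NormedAddCommGroup E] [InnerProductSpace ℝ E] [MeasurableSpace E]
  {ν : Measure E} {f₁ f₂ : ℝ → E → ℝ → ℝ} {w₁ w₂ : ℝ → E → ℝ}

lemma IsViscositySuper.exp_mul (h : IsViscositySuper ν f₁ w₁) (B : ℝ) :
    IsViscositySuper ν
      (fun t x v => Real.exp (-(B * t)) * f₁ t x (Real.exp (B * t) * v) - B * v)
      (fun t x => Real.exp (-(B * t)) * w₁ t x) := by
  simpa only [IsViscositySuper, mul_neg, neg_sub', sub_neg_eq_add, neg_add'] using
    IsViscositySub.exp_mul h B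

variable [IsSymmLevyMeasure ν] [BorelSpace E] [ProperSpace E] {K : NNReal} {D η T : ℝ}

-- Multiplying by `exp (-(B * t))` with `B` large makes the equation strictly proper.
theorem sub_le_exp_mul_logWeight (h₁ : IsViscositySub ν f₁ w₁) (h₂ : IsViscositySuper ν f₂ w₂)
    (h_lip : LipschitzWith K (fun q : ℝ × E × ℝ => f₂ q.1 q.2.1 q.2.2))
    (hD : ∀ t x v, |f₂ t x v| ≤ D) (hη : 0 < η)
    (h_le : ∀ t x v, f₁ t x v ≤ f₂ t x v + η * logWeight x) (h_init : ∀ x, w₁ 0 x ≤ w₂ 0 x)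
    (hT : 0 ≤ T) (z : E) :
    w₁ T z - w₂ T z ≤ Real.exp ((K + (weightConst ν + 1)) * T) * (η * logWeight z) := by
  set B := K + (weightConst ν + 1)
  have hB : 0 ≤ B := by
    have := weightConst_nonneg ν
    positivity
  obtain ⟨M, hM⟩ := IsViscositySub.bounded h₂ (T + 1)
  simp only [abs_neg] at hM
  have hC : 0 ≤ K + (K * M + D) * B := by
    have := (abs_nonneg _).trans (hD 0 0 0)
    have := (abs_nonneg _).trans (hM 0 ⟨le_rfl, by linarith⟩ 0)
    positivity
  have h_cancel : ∀ s v, Real.exp (B * s) * (Real.exp (-(B * s)) * v) = v := fun s v => by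
    rw [← mul_assoc, ← Real.exp_add, add_neg_cancel, Real.exp_zero, one_mul]
  have h_scaled := sub_le_mul_logWeight_of_proper (h₁.exp_mul B) (h₂.exp_mul B)
    (fun x => by simpa using h_init x) hη hC hT (fun t ht τ hτ x y h_val => ?_) z
  · rw [← mul_sub] at h_scaled
    calc w₁ T z - w₂ T z = Real.exp (B * T) * (Real.exp (-(B * T)) * (w₁ T z - w₂ T z)) :=
          (h_cancel _ _).symm
      _ ≤ Real.exp (B * T) * (η * logWeight z) := by gcongr
  · have h_one : Real.exp (-(B * t)) ≤ 1 :=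
      Real.exp_le_one_iff.2 (neg_nonpos.2 (mul_nonneg hB ht.1))
    have h_rhs := exp_neg_mul_mul_sub_le_of_lipschitzWith h_lip hD hB ht.1 hτ.1 (hM τ hτ y)
      h_val x y
    have h_error : Real.exp (-(B * t)) * f₁ t x (w₁ t x)
        ≤ Real.exp (-(B * t)) * f₂ t x (w₁ t x) + η * logWeight x := by
      calc Real.exp (-(B * t)) * f₁ t x (w₁ t x)
          ≤ Real.exp (-(B * t)) * (f₂ t x (w₁ t x) + η * logWeight x) := by
            gcongr; exact h_le t x _
        _ ≤ Real.exp (-(B * t)) * f₂ t x (w₁ t x) + η * logWeight x := by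
            rw [mul_add]
            exact add_le_add_right
              (mul_le_of_le_one_left (mul_nonneg hη.le (logWeight_nonneg x)) h_one) _
    simp only [h_cancel]
    linarith

theorem IsViscositySub.le_of_super (h₁ : IsViscositySub ν f₁ w₁) (h₂ : IsViscositySuper ν f₂ w₂)
    (h_lip : LipschitzWith K (fun q : ℝ × E × ℝ => f₂ q.1 q.2.1 q.2.2))
    (hD : ∀ t x v, |f₂ t x v| ≤ D) (h_le : ∀ t x v, f₁ t x v ≤ f₂ t x v)
    (h_init : ∀ x, w₁ 0 x ≤ w₂ 0 x) (hT : 0 ≤ T) (x : E) : w₁ T x ≤ w₂ T x := by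
  refine le_of_forall_pos_le_add fun ε hε => ?_
  have h_weight := one_pos.trans_le (one_le_logWeight x)
  set A := Real.exp ((K + (weightConst ν + 1)) * T)
  have hA_pos : 0 < A := Real.exp_pos _
  have hη : 0 < ε / (A * logWeight x) := by positivity
  have h_sub := sub_le_exp_mul_logWeight h₁ h₂ h_lip hD hη
    (fun t x v => le_add_of_le_of_nonneg (h_le t x v) (mul_nonneg hη.le (logWeight_nonneg x)))
    h_init hT x
  have h_eq : A * (ε / (A * logWeight x) * logWeight x) = ε := by field_simp
  linarith

end Comparison

/-! ### The cell problem -/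

/-- The zeroth order part of the cell problem `∂_τ w = I[w] + L - b(w + p·y) + σ(τ, y)`, where `b`
stands for `W'`. -/
def cellRHS {E : Type*} [NormedAddCommGroup E] [InnerProductSpace ℝ E] (b : ℝ → ℝ)
    (σ : ℝ → E → ℝ) (p : E) (L : ℝ) (t : ℝ) (y : E) (v : ℝ) : ℝ :=
  L - b (v + ⟪p, y⟫) + σ t y

/-- Lipschitz periodic data of the cell problem. The lattice `ℤ^N` is replaced by a relatively dense
set of space periods. Unlike a condition on the potential of `b`, this is visibly stable under
`b ↦ -b(-·)`, `σ ↦ -σ`. -/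
structure IsPeriodicCellData {E : Type*} [NormedAddCommGroup E] (b : ℝ → ℝ) (σ : ℝ → E → ℝ)
    (K : NNReal) : Prop where
  lipschitzWith_nonlinearity : LipschitzWith K b
  periodic_nonlinearity : Function.Periodic b 1
  lipschitzWith_forcing : LipschitzWith K (fun q : ℝ × E => σ q.1 q.2)
  periodic_time : ∀ x, Function.Periodic (fun t => σ t x) 1
  exists_near_period : ∃ R, ∀ x, ∃ k, ‖x - k‖ ≤ R ∧ ∀ t, Function.Periodic (σ t) k

namespace IsPeriodicCellData

variable {E : Type*} [NormedAddCommGroup E] {b : ℝ → ℝ} {σ : ℝ → E → ℝ} {K : NNReal}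

lemma neg (h : IsPeriodicCellData b σ K) :
    IsPeriodicCellData (fun v => -b (-v)) (fun t x => -σ t x) K where
  lipschitzWith_nonlinearity := by
    have := (h.lipschitzWith_nonlinearity.comp LipschitzWith.id.neg).neg
    rwa [mul_one] at this
  periodic_nonlinearity v := by
    simp only [neg_add', h.periodic_nonlinearity.sub_eq]
  lipschitzWith_forcing := h.lipschitzWith_forcing.neg
  periodic_time x t := congrArg Neg.neg (h.periodic_time x t)
  exists_near_period := h.exists_near_period.imp fun _ hR x => (hR x).imp fun _ hk =>
    ⟨hk.1, fun t y => congrArg Neg.neg (hk.2 t y)⟩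

lemma exists_abs_nonlinearity_le (h : IsPeriodicCellData b σ K) : ∃ C, ∀ v, |b v| ≤ C := by
  obtain ⟨C, hC⟩ := (h.periodic_nonlinearity.isBounded_of_continuous one_ne_zero
    h.lipschitzWith_nonlinearity.continuous).exists_norm_le
  exact ⟨C, fun v => hC _ (mem_range_self v)⟩

lemma exists_abs_forcing_le (h : IsPeriodicCellData b σ K) : ∃ C, ∀ t x, |σ t x| ≤ C := by
  obtain ⟨R, hR⟩ := h.exists_near_period
  refine ⟨|σ 0 0| + K * max 1 R, fun t x => ?_⟩
  obtain ⟨k, hk, h_per⟩ := hR x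
  have h_reduce : σ t x = σ (Int.fract t) (x - k) := by
    rw [(h_per _).sub_eq]
    exact (by simpa using (h.periodic_time x).sub_int_mul_eq ⌊t⌋ (x := t) : _ = σ t x).symm
  have h_lip := h.lipschitzWith_forcing.dist_le_mul (Int.fract t, x - k) (0, 0)
  rw [Prod.dist_eq, Real.dist_eq, Real.dist_eq, sub_zero, dist_zero_right, Int.abs_fract] at h_lip
  have h_max : (K : ℝ) * max (Int.fract t) ‖x - k‖ ≤ K * max 1 R := by
    gcongr
    exact (Int.fract_lt_one t).le
  rw [h_reduce]
  linarith [abs_sub_abs_le_abs_sub (σ (Int.fract t) (x - k)) (σ 0 0)]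

variable [InnerProductSpace ℝ E]

lemma exists_abs_cellRHS_sub_le (h : IsPeriodicCellData b σ K) :
    ∃ C, ∀ p L t x v, |cellRHS b σ p L t x v - L| ≤ C := by
  obtain ⟨C₁, hC₁⟩ := h.exists_abs_nonlinearity_le
  obtain ⟨C₂, hC₂⟩ := h.exists_abs_forcing_le
  refine ⟨C₂ + C₁, fun p L t x v => ?_⟩
  calc |cellRHS b σ p L t x v - L| = |σ t x - b (v + ⟪p, x⟫)| := by
        rw [cellRHS]
        ring_nf
    _ ≤ C₂ + C₁ := (abs_sub _ _).trans (add_le_add (hC₂ t x) (hC₁ _))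

lemma exists_abs_cellRHS_le (h : IsPeriodicCellData b σ K) (p : E) (L : ℝ) :
    ∃ D, ∀ t x v, |cellRHS b σ p L t x v| ≤ D := by
  obtain ⟨C, hC⟩ := h.exists_abs_cellRHS_sub_le
  exact ⟨C + |L|, fun t x v => by
    linarith [abs_sub_abs_le_abs_sub (cellRHS b σ p L t x v) L, hC p L t x v]⟩

lemma exists_lipschitzWith_cellRHS (h : IsPeriodicCellData b σ K) (p : E) (L : ℝ) :
    ∃ K', LipschitzWith K' (fun q : ℝ × E × ℝ => cellRHS b σ p L q.1 q.2.1 q.2.2) := by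
  have h_space : LipschitzWith (1 * 1) (fun q : ℝ × E × ℝ => q.2.1) :=
    LipschitzWith.prod_fst.comp LipschitzWith.prod_snd
  have h_value : LipschitzWith (1 * 1) (fun q : ℝ × E × ℝ => q.2.2) :=
    LipschitzWith.prod_snd.comp LipschitzWith.prod_snd
  have h_arg := h_value.add ((innerSL ℝ p).lipschitz.comp h_space)
  exact ⟨_, ((LipschitzWith.const L).sub (h.lipschitzWith_nonlinearity.comp h_arg)).add
    (h.lipschitzWith_forcing.comp (LipschitzWith.prod_fst.prodMk h_space))⟩

-- Only far away is a small change of `p` felt by the bounded nonlinearity, and the weight is large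
-- there.
lemma eventually_cellRHS_le (h : IsPeriodicCellData b σ K) (p : E) (L : ℝ) {η : ℝ} (hη : 0 < η) :
    ∀ᶠ q : E × ℝ in 𝓝 (p, L), ∀ t x v,
      cellRHS b σ q.1 q.2 t x v ≤ cellRHS b σ p L t x v + η * logWeight x := by
  obtain ⟨C, hC⟩ := h.exists_abs_cellRHS_sub_le (E := E)
  obtain ⟨R, hR_nonneg, hR⟩ := exists_forall_lt_norm_imp_lt_logWeight (E := E) ((2 * C + 1) / η)
  have h_tendsto : Tendsto (fun q : E × ℝ => |q.2 - L| + K * (‖q.1 - p‖ * R)) (𝓝 (p, L)) (𝓝 0) :=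
    Continuous.tendsto' (by fun_prop) _ _ (by simp)
  filter_upwards [h_tendsto.eventually_lt_const (lt_min hη one_pos)] with q hq t x v
  have h_level := le_abs_self (q.2 - L)
  obtain hx | hx := le_or_gt ‖x‖ R
  · have h_lip : b (v + ⟪p, x⟫) - b (v + ⟪q.1, x⟫) ≤ K * (‖q.1 - p‖ * R) := by
      refine (le_abs_self _).trans ((h.lipschitzWith_nonlinearity.dist_le_mul _ _).trans ?_)
      rw [dist_comm, dist_add_left, Real.dist_eq, ← inner_sub_left]
      gcongr
      exact (abs_real_inner_le_norm _ _).trans (by gcongr)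
    have h_small := hq.trans_le (min_le_left _ _)
    simp only [cellRHS]
    linarith [le_mul_of_one_le_right hη.le (one_le_logWeight x)]
  · have h_small := hq.trans_le (min_le_right _ _)
    have h_large := (div_lt_iff₀' hη).1 (hR x hx)
    have h_dist : 0 ≤ K * (‖q.1 - p‖ * R) := by positivity
    linarith [(abs_le.1 (hC q.1 q.2 t x v)).2, (abs_le.1 (hC p L t x v)).1]

end IsPeriodicCellData

namespace IsViscositySol

variable {E : Type*} [NormedAddCommGroup E] [InnerProductSpace ℝ E] [MeasurableSpace E]
  {ν : Measure E} {b : ℝ → ℝ} {σ : ℝ → E → ℝ} {K : NNReal} {p : E} {L : ℝ} {w : ℝ → E → ℝ}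

lemma cell_neg (h : IsViscositySol ν (cellRHS b σ p L) w) :
    IsViscositySol ν (cellRHS (fun v => -b (-v)) (fun t y => -σ t y) (-p) (-L))
      (fun t y => -w t y) := by
  have h_rhs : cellRHS (fun v => -b (-v)) (fun t y => -σ t y) (-p) (-L)
      = fun t y v => -cellRHS b σ p L t y (-v) := by
    ext t y v
    simp only [cellRHS, inner_neg_left, neg_add, neg_neg, neg_sub']
  exact h_rhs ▸ h.neg

lemma cell_comp_neg [BorelSpace E] [ν.IsNegInvariant] (h : IsViscositySol ν (cellRHS b σ p L) w) :
    IsViscositySol ν (cellRHS b (fun t y => σ t (-y)) (-p) L) (fun t y => w t (-y)) := by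
  have h_rhs : cellRHS b (fun t y => σ t (-y)) (-p) L = fun t y v => cellRHS b σ p L t (-y) v := by
    ext t y v
    simp only [cellRHS, inner_neg_left, inner_neg_right]
  exact h_rhs ▸ h.comp_neg

lemma cell_comp_add (hd : IsPeriodicCellData b σ K) (h : IsViscositySol ν (cellRHS b σ p L) w)
    (n : ℕ) {k : E} (hk : ∀ t, Function.Periodic (σ t) k) {c : ℝ} {m : ℤ} (hm : ⟪p, k⟫ - c = m) :
    IsViscositySol ν (cellRHS b σ p L) (fun t y => w (t + n) (y + k) + c) := by
  have h_rhs : (fun t y v => cellRHS b σ p L (t + n) (y + k) (v - c)) = cellRHS b σ p L := by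
    ext t y v
    have h_b : b (v - c + ⟪p, y + k⟫) = b (v + ⟪p, y⟫) := by
      rw [← hd.periodic_nonlinearity.int_mul m (v + ⟪p, y⟫), mul_one, ← hm, inner_add_right]
      ring_nf
    have h_σ : σ (t + n) (y + k) = σ t y := by
      rw [hk]
      simpa using (hd.periodic_time y).nat_mul n t
    rw [cellRHS, cellRHS, h_b, h_σ]
  exact h_rhs ▸ h.comp_add n.cast_nonneg k c

variable [IsSymmLevyMeasure ν] [BorelSpace E] [ProperSpace E]

lemma cell_le (hd : IsPeriodicCellData b σ K) {L₁ L₂ : ℝ} (hL : L₁ ≤ L₂) {w₁ w₂ : ℝ → E → ℝ}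
    (h₁ : IsViscositySol ν (cellRHS b σ p L₁) w₁) (h₂ : IsViscositySol ν (cellRHS b σ p L₂) w₂)
    (h_init : ∀ x, w₁ 0 x ≤ w₂ 0 x) {t : ℝ} (ht : 0 ≤ t) (x : E) : w₁ t x ≤ w₂ t x := by
  obtain ⟨_, h_lip⟩ := hd.exists_lipschitzWith_cellRHS p L₂
  obtain ⟨_, h_bdd⟩ := hd.exists_abs_cellRHS_le p L₂
  refine h₁.sub.le_of_super h₂.super h_lip h_bdd (fun t x v => ?_) h_init ht x
  simp only [cellRHS]
  gcongr

lemma cell_add_period_le (hd : IsPeriodicCellData b σ K) (h : IsViscositySol ν (cellRHS b σ p L) w)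
    (h_init : ∀ x, w 0 x = 0) {k : E} (hk : ∀ t, Function.Periodic (σ t) k) {t : ℝ} (ht : 0 ≤ t)
    (y : E) : w t (y + k) ≤ w t y + 1 := by
  have h_shift := h.cell_comp_add hd 0 hk (sub_sub_cancel ⟪p, k⟫ (⌈⟪p, k⟫⌉ : ℝ))
  simp only [Nat.cast_zero, add_zero] at h_shift
  have h_le := h_shift.cell_le hd le_rfl h
    (fun x => by simpa only [h_init, zero_add, sub_nonpos] using Int.le_ceil _) ht y
  linarith [Int.ceil_lt_add_one ⟪p, k⟫]

end IsViscositySol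

/-! ### Asymptotic slopes -/

/-- `w(τ, y) / τ → l` as `τ → +∞`, locally uniformly in `y`. -/
def HasSlope {E : Type*} [TopologicalSpace E] (w : ℝ → E → ℝ) (l : ℝ) : Prop :=
  TendstoLocallyUniformly (fun τ y => w τ y / τ) (fun _ => l) atTop

namespace HasSlope

section Topological

variable {E : Type*} [TopologicalSpace E] {w w₁ w₂ : ℝ → E → ℝ} {l l₁ l₂ : ℝ}

protected lemma tendsto (h : HasSlope w l) (x : E) : Tendsto (fun t => w t x / t) atTop (𝓝 l) :=
  (tendstoLocallyUniformlyOn_univ.2 h).tendsto_at (mem_univ x)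

lemma le_of_forall_le (h₁ : HasSlope w₁ l₁) (h₂ : HasSlope w₂ l₂) (x : E)
    (h_le : ∀ t, 0 ≤ t → w₁ t x ≤ w₂ t x) : l₁ ≤ l₂ := by
  refine le_of_tendsto_of_tendsto (h₁.tendsto x) (h₂.tendsto x) ?_
  filter_upwards [eventually_ge_atTop 0] with t ht
  exact div_le_div_of_nonneg_right (h_le t ht) ht

lemma le_div_of_forall_nat_mul_le (h : HasSlope w l) {T c : ℝ} (hT : 0 < T) {x : E}
    (h_le : ∀ j : ℕ, w (j * T) x ≤ j * c) : l ≤ c / T := by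
  have h_times : Tendsto (fun j : ℕ => (j : ℝ) * T) atTop atTop :=
    tendsto_natCast_atTop_atTop.atTop_mul_const hT
  refine le_of_tendsto ((h.tendsto x).comp h_times) ?_
  filter_upwards [eventually_gt_atTop 0] with j hj
  have hj' : (0 : ℝ) < j := Nat.cast_pos.2 hj
  rw [Function.comp_apply, ← mul_div_mul_left c T hj'.ne']
  exact div_le_div_of_nonneg_right (h_le j) (by positivity)

lemma neg (h : HasSlope w l) : HasSlope (fun t y => -w t y) (-l) := by
  simp only [HasSlope, neg_div]
  exact TendstoLocallyUniformly.neg h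

end Topological

variable {E : Type*} [NormedAddCommGroup E] {w : ℝ → E → ℝ} {l : ℝ}

lemma comp_neg (h : HasSlope w l) : HasSlope (fun t y => w t (-y)) l :=
  TendstoLocallyUniformly.comp h Neg.neg continuous_neg

lemma eventually_le_mul [ProperSpace E] (h : HasSlope w l) {ε : ℝ} (hε : 0 < ε) (R : ℝ) :
    ∀ᶠ t in atTop, ∀ y, ‖y‖ ≤ R → w t y ≤ (l + ε) * t := by
  have h_unif := (tendstoLocallyUniformly_iff_forall_isCompact.1 h) _
    (isCompact_closedBall (0 : E) R)
  filter_upwards [Metric.tendstoUniformlyOn_iff.1 h_unif ε hε, eventually_gt_atTop 0]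
    with t h_close ht y hy
  have h_quot := (abs_lt.1 (h_close y (by simpa using hy))).1
  rw [← div_le_iff₀ ht]
  linarith

end HasSlope

lemma hasSlope_const_mul {E : Type*} [TopologicalSpace E] (c : ℝ) :
    HasSlope (fun t (_ : E) => c * t) c := by
  intro u hu x
  refine ⟨univ, univ_mem, (eventually_ne_atTop 0).mono fun t ht y _ => ?_⟩
  simp only [mul_div_cancel_right₀ c ht]
  exact refl_mem_uniformity hu

namespace IsViscositySol

variable {E : Type*} [NormedAddCommGroup E] [InnerProductSpace ℝ E] [MeasurableSpace E]
  [BorelSpace E] [ProperSpace E] {ν : Measure E} [IsSymmLevyMeasure ν] {b : ℝ → ℝ}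
  {σ : ℝ → E → ℝ} {K : NNReal} {p : E} {L l : ℝ} {w : ℝ → E → ℝ}

lemma cell_le_add_one (hd : IsPeriodicCellData b σ K) (h : IsViscositySol ν (cellRHS b σ p L) w)
    (h_init : ∀ x, w 0 x = 0) {R : ℝ}
    (hR : ∀ x : E, ∃ k, ‖x - k‖ ≤ R ∧ ∀ t, Function.Periodic (σ t) k) {t c : ℝ} (ht : 0 ≤ t)
    (h_ball : ∀ y, ‖y‖ ≤ R → w t y ≤ c) (y : E) : w t y ≤ c + 1 := by
  obtain ⟨k, hk, h_per⟩ := hR y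
  calc w t y = w t (y - k + k) := by rw [sub_add_cancel]
    _ ≤ w t (y - k) + 1 := h.cell_add_period_le hd h_init h_per ht _
    _ ≤ c + 1 := add_le_add_left (h_ball _ hk) 1

lemma cell_slope_le_div (hd : IsPeriodicCellData b σ K) (h : IsViscositySol ν (cellRHS b σ p L) w)
    (h_init : ∀ x, w 0 x = 0) (h_slope : HasSlope w l) {T : ℕ} (hT : 0 < T) {n : ℤ}
    (h_le : ∀ y, w T y ≤ n) : l ≤ n / T := by
  have h_shift := h.cell_comp_add hd T (k := 0) (c := -n) (m := n) (fun t y => by rw [add_zero])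
    (by rw [inner_zero_right, zero_sub, neg_neg])
  have h_step : ∀ t : ℝ, 0 ≤ t → w (t + T) 0 ≤ w t 0 + n := fun t ht => by
    have h_comp := h_shift.cell_le hd le_rfl h
      (fun x => by simpa [h_init] using h_le x) ht 0
    rw [add_zero] at h_comp
    linarith
  refine h_slope.le_div_of_forall_nat_mul_le (Nat.cast_pos.2 hT) (x := 0) fun j => ?_
  induction j with
  | zero => simp [h_init]
  | succ j ih =>
    rw [Nat.cast_succ, add_one_mul, add_one_mul]
    linarith [h_step (j * T) (by positivity)]

lemma eventually_cell_le_add (hd : IsPeriodicCellData b σ K)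
    (h : IsViscositySol ν (cellRHS b σ p L) w) {T : ℝ} (hT : 0 ≤ T) (R : ℝ) {ε : ℝ} (hε : 0 < ε) :
    ∀ᶠ q in 𝓝 (p, L), ∀ w', IsViscositySol ν (cellRHS b σ q.1 q.2) w' →
      (∀ x, w' 0 x ≤ w 0 x) → ∀ y, ‖y‖ ≤ R → w' T y ≤ w T y + ε := by
  obtain ⟨K', h_lip⟩ := hd.exists_lipschitzWith_cellRHS p L
  obtain ⟨D, hD⟩ := hd.exists_abs_cellRHS_le p L
  set A := Real.exp ((K' + (weightConst ν + 1)) * T)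
  set ω := 1 + Real.log (1 + R ^ 2)
  have hA : 0 < A := Real.exp_pos _
  have hω : 0 < ω := by
    have := Real.log_nonneg (le_add_of_nonneg_right (sq_nonneg R) : 1 ≤ 1 + R ^ 2)
    positivity
  have hη : 0 < ε / (A * ω) := by positivity
  filter_upwards [hd.eventually_cellRHS_le p L hη] with q hq w' h' h_init y hy
  have h_sub := sub_le_exp_mul_logWeight h'.sub h.super h_lip hD hη hq h_init hT y
  have h_weight : A * (ε / (A * ω) * logWeight y) ≤ ε := by
    calc A * (ε / (A * ω) * logWeight y) ≤ A * (ε / (A * ω) * ω) := by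
          gcongr
          exact logWeight_le_of_norm_le hy
      _ = ε := by field_simp
  linarith

end IsViscositySol

/-! ### The effective Hamiltonian -/

/-- `H p L` is the asymptotic slope of a solution, with zero initial datum, of the cell problem. -/
def IsEffectiveHamiltonian {E : Type*} [NormedAddCommGroup E] [InnerProductSpace ℝ E]
    [MeasurableSpace E] (ν : Measure E) (b : ℝ → ℝ) (σ : ℝ → E → ℝ) (H : E → ℝ → ℝ) : Prop :=
  ∀ p L, ∃ w, IsViscositySol ν (cellRHS b σ p L) w ∧ (∀ x, w 0 x = 0) ∧ HasSlope w (H p L)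

namespace IsEffectiveHamiltonian

variable {E : Type*} [NormedAddCommGroup E] [InnerProductSpace ℝ E] [MeasurableSpace E]
  {ν : Measure E} {b : ℝ → ℝ} {σ : ℝ → E → ℝ} {H H₁ H₂ : E → ℝ → ℝ} {K : NNReal}

lemma neg (h : IsEffectiveHamiltonian ν b σ H) :
    IsEffectiveHamiltonian ν (fun v => -b (-v)) (fun t x => -σ t x) (fun p L => -H (-p) (-L)) := by
  intro p L
  obtain ⟨w, hw, h_init, h_slope⟩ := h (-p) (-L)
  exact ⟨fun t y => -w t y, by simpa only [neg_neg] using hw.cell_neg,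
    fun x => neg_eq_zero.2 (h_init x), h_slope.neg⟩

variable [BorelSpace E]

lemma comp_neg [ν.IsNegInvariant] (h : IsEffectiveHamiltonian ν b σ H) :
    IsEffectiveHamiltonian ν b (fun t x => σ t (-x)) (fun p L => H (-p) L) := by
  intro p L
  obtain ⟨w, hw, h_init, h_slope⟩ := h (-p) L
  exact ⟨fun t y => w t (-y), by simpa only [neg_neg] using hw.cell_comp_neg,
    fun x => h_init (-x), h_slope.comp_neg⟩

variable [ProperSpace E] [IsSymmLevyMeasure ν]

lemma le_of_le (hd : IsPeriodicCellData b σ K) (h₁ : IsEffectiveHamiltonian ν b σ H₁)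
    (h₂ : IsEffectiveHamiltonian ν b σ H₂) (p : E) {L₁ L₂ : ℝ} (hL : L₁ ≤ L₂) :
    H₁ p L₁ ≤ H₂ p L₂ := by
  obtain ⟨w₁, hw₁, h_init₁, h_slope₁⟩ := h₁ p L₁
  obtain ⟨w₂, hw₂, h_init₂, h_slope₂⟩ := h₂ p L₂
  exact h_slope₁.le_of_forall_le h_slope₂ 0 fun t ht =>
    hw₁.cell_le hd hL hw₂ (fun x => by rw [h_init₁, h_init₂]) ht 0

protected lemma monotone (hd : IsPeriodicCellData b σ K) (h : IsEffectiveHamiltonian ν b σ H)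
    (p : E) : Monotone (H p) :=
  fun _ _ hL => h.le_of_le hd h p hL

protected lemma unique (hd : IsPeriodicCellData b σ K) (h₁ : IsEffectiveHamiltonian ν b σ H₁)
    (h₂ : IsEffectiveHamiltonian ν b σ H₂) : H₁ = H₂ := by
  ext p L
  exact le_antisymm (h₁.le_of_le hd h₂ p le_rfl) (h₂.le_of_le hd h₁ p le_rfl)

lemma exists_sub_le (hd : IsPeriodicCellData b σ K) (h : IsEffectiveHamiltonian ν b σ H) :
    ∃ C, ∀ p L, L - C ≤ H p L := by
  obtain ⟨C, hC⟩ := hd.exists_abs_cellRHS_sub_le (E := E)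
  refine ⟨C, fun p L => ?_⟩
  obtain ⟨w, hw, h_init, h_slope⟩ := h p L
  obtain ⟨_, h_lip⟩ := hd.exists_lipschitzWith_cellRHS p L
  obtain ⟨_, h_bdd⟩ := hd.exists_abs_cellRHS_le p L
  refine (hasSlope_const_mul (L - C)).le_of_forall_le h_slope 0 fun t ht => ?_
  have h_linear : IsViscositySub ν (cellRHS b σ p L) (fun t _ => (L - C) * t) :=
    isViscositySub_const_mul fun t x v => by linarith [(abs_le.1 (hC p L t x v)).1]
  exact h_linear.le_of_super hw.super h_lip h_bdd (fun _ _ _ => le_rfl)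
    (fun x => by rw [h_init, mul_zero]) ht 0

lemma exists_le_add (hd : IsPeriodicCellData b σ K) (h : IsEffectiveHamiltonian ν b σ H) :
    ∃ C, ∀ p L, H p L ≤ L + C := by
  obtain ⟨C, hC⟩ := h.neg.exists_sub_le hd.neg
  refine ⟨C, fun p L => ?_⟩
  have h_neg := hC (-p) (-L)
  rw [neg_neg, neg_neg] at h_neg
  linarith

-- On a finite time interval the solution depends continuously on `(p, L)`, locally uniformly in
-- space. Periodicity makes the resulting bound `w'(T, ·) ≤ n` global, and iterating it in time
-- bounds the slope of `w'` by `n / T`.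
lemma upperSemicontinuous (hd : IsPeriodicCellData b σ K) (h : IsEffectiveHamiltonian ν b σ H) :
    UpperSemicontinuous (fun q : E × ℝ => H q.1 q.2) := by
  rintro ⟨p, L⟩ l' hl'
  obtain ⟨w, hw, h_init, h_slope⟩ := h p L
  obtain ⟨R, hR⟩ := hd.exists_near_period
  set ε := l' - H p L
  have hε : 0 < ε := sub_pos.2 hl'
  obtain ⟨T, hT_ball, hT_large⟩ := ((h_slope.eventually_le_mul (half_pos hε) R).natCast_atTop.and
    (eventually_gt_atTop (6 / ε)).natCast_atTop).exists
  have hT : (0 : ℝ) < T := (by positivity : 0 < 6 / ε).trans hT_large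
  set c := (H p L + ε / 2) * T with hc
  filter_upwards [hw.eventually_cell_le_add hd hT.le R one_pos] with q hq
  obtain ⟨w', hw', h_init', h_slope'⟩ := h q.1 q.2
  have h_ball : ∀ y, ‖y‖ ≤ R → w' T y ≤ c + 1 := fun y hy =>
    (hq w' hw' (fun x => by rw [h_init, h_init']) y hy).trans (by linarith [hT_ball y hy])
  have h_global : ∀ y, w' T y ≤ ⌈c + 1 + 1⌉ := fun y =>
    (hw'.cell_le_add_one hd h_init' hR hT.le h_ball y).trans (Int.le_ceil _)
  have h_div := hw'.cell_slope_le_div hd h_init' h_slope' (Nat.cast_pos.1 hT) h_global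
  refine h_div.trans_lt ((div_lt_iff₀ hT).2 ?_)
  have h_room := (div_lt_iff₀' hε).1 hT_large
  linarith [Int.ceil_lt_add_one (c + 1 + 1)]

protected lemma continuous (hd : IsPeriodicCellData b σ K) (h : IsEffectiveHamiltonian ν b σ H) :
    Continuous (fun q : E × ℝ => H q.1 q.2) := by
  have h_lower : LowerSemicontinuous (fun q : E × ℝ => H q.1 q.2) := by
    have h_upper := (h.neg.upperSemicontinuous hd.neg).comp
      (g := fun q : E × ℝ => (-q.1, -q.2)) (by fun_prop)
    intro q y hy
    filter_upwards [h_upper q (-y) (by simpa using hy)] with q' hq'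
    simpa using hq'
  exact continuous_iff_lower_upperSemicontinuous.2 ⟨h_lower, h.upperSemicontinuous hd⟩

end IsEffectiveHamiltonian

/-! ### Stable-like kernels -/

section RadialIntegrability

variable {E : Type*} [NormedAddCommGroup E] [NormedSpace ℝ E] [FiniteDimensional ℝ E]
  [Nontrivial E] [MeasurableSpace E] [BorelSpace E] (μ : Measure E) [μ.IsAddHaarMeasure] {a : ℝ}

lemma integrableOn_norm_rpow_preimage {S : Set ℝ} (hS : MeasurableSet S)
    (h : IntegrableOn (fun y => y ^ ((Module.finrank ℝ E : ℝ) - 1 + a)) (S ∩ Ioi 0)) :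
    IntegrableOn (fun z : E => ‖z‖ ^ a) {z | ‖z‖ ∈ S} μ := by
  rw [← integrable_indicator_iff (show MeasurableSet {z : E | ‖z‖ ∈ S} from measurable_norm hS)]
  refine (integrable_fun_norm_addHaar μ (f := S.indicator (· ^ a))).2 ?_
  rw [← integrableOn_indicator_iff hS] at h
  refine h.congr_fun (fun y (hy : 0 < y) => ?_) measurableSet_Ioi
  have h_finrank : y ^ (Module.finrank ℝ E - 1) = y ^ ((Module.finrank ℝ E : ℝ) - 1) := by
    rw [← Real.rpow_natCast, Nat.cast_pred Module.finrank_pos]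
  by_cases hyS : y ∈ S
  · simp only [indicator_of_mem hyS, Real.rpow_add hy, h_finrank, smul_eq_mul]
  · simp only [indicator_of_notMem hyS, smul_zero]

lemma integrableOn_norm_rpow_norm_le (ha : -(Module.finrank ℝ E : ℝ) < a) (r : ℝ) :
    IntegrableOn (fun z : E => ‖z‖ ^ a) {z | ‖z‖ ≤ r} μ := by
  refine integrableOn_norm_rpow_preimage μ (S := Iic r) measurableSet_Iic ?_
  have h_Ioc := (intervalIntegral.intervalIntegrable_rpow' (a := 0) (b := r)
    (r := (Module.finrank ℝ E : ℝ) - 1 + a) (by linarith)).1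
  rwa [inter_comm]

lemma integrableOn_norm_rpow_lt_norm (ha : a < -(Module.finrank ℝ E : ℝ)) {r : ℝ} (hr : 0 < r) :
    IntegrableOn (fun z : E => ‖z‖ ^ a) {z | r < ‖z‖} μ :=
  integrableOn_norm_rpow_preimage μ (S := Ioi r) measurableSet_Ioi <|
    (integrableOn_Ioi_rpow_of_lt (by linarith) hr).mono_set inter_subset_left

end RadialIntegrability

lemma isNegInvariant_withDensity {E : Type*} [NormedAddCommGroup E] [MeasurableSpace E]
    [BorelSpace E] {μ : Measure E} [μ.IsNegInvariant] {f : E → ENNReal}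
    (hf : ∀ z, f (-z) = f z) : (μ.withDensity f).IsNegInvariant where
  neg_eq_self := by
    ext S hS
    rw [Measure.neg, Measure.map_apply measurable_neg hS, withDensity_apply _ hS,
      withDensity_apply _ (measurable_neg hS),
      ← (Measure.measurePreserving_neg μ).setLIntegral_comp_preimage_emb
        (MeasurableEquiv.neg E).measurableEmbedding f S]
    simp only [hf]

lemma logWeight_le_mul_rpow {E : Type*} [NormedAddCommGroup E] {s : ℝ} (hs : 0 < s) {z : E}
    (hz : 1 < ‖z‖) : logWeight z ≤ (1 + 2 ^ (s / 2) / (s / 2)) * ‖z‖ ^ s := by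
  have h_norm : 0 ≤ ‖z‖ := norm_nonneg z
  have h_log : Real.log (1 + ‖z‖ ^ 2) ≤ 2 ^ (s / 2) / (s / 2) * ‖z‖ ^ s :=
    calc Real.log (1 + ‖z‖ ^ 2)
        ≤ (1 + ‖z‖ ^ 2) ^ (s / 2) / (s / 2) :=
          Real.log_le_rpow_div (by positivity) (by positivity)
      _ ≤ (2 * ‖z‖ ^ 2) ^ (s / 2) / (s / 2) := by
          gcongr
          nlinarith
      _ = 2 ^ (s / 2) / (s / 2) * ‖z‖ ^ s := by
          rw [Real.mul_rpow zero_le_two (by positivity), ← Real.rpow_natCast_mul h_norm,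
            Nat.cast_ofNat, mul_div_cancel₀ s two_ne_zero, div_mul_eq_mul_div]
  rw [add_mul, one_mul]
  exact add_le_add (Real.one_le_rpow hz.le hs.le) h_log

/-- The Lévy measure `g(z/|z|) |z|^{-N-2s} dz`. -/
noncomputable def levyMeasure (N : ℕ) (s : ℝ) (g : EN N → ℝ) : Measure (EN N) :=
  volume.withDensity fun z => ENNReal.ofReal (levyKernel N s g z)

section LevyKernel

variable {N : ℕ} {s : ℝ} {g : EN N → ℝ}

lemma levyKernel_zero (hs : 0 < s) (g : EN N → ℝ) : levyKernel N s g 0 = 0 := by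
  have h_exp : -(N : ℝ) - 2 * s < 0 := by linarith [(Nat.cast_nonneg N : (0 : ℝ) ≤ N)]
  rw [levyKernel, norm_zero, Real.zero_rpow h_exp.ne, mul_zero]

lemma levyKernel_nonneg (hs : 0 < s) (hg : H1 N g) (z : EN N) : 0 ≤ levyKernel N s g z := by
  obtain rfl | hz := eq_or_ne z 0
  · exact (levyKernel_zero hs g).ge
  · have := hg.2.1 _ (norm_smul_inv_norm (𝕜 := ℝ) hz)
    unfold levyKernel
    positivity

lemma levyKernel_neg (hg : H1 N g) (z : EN N) : levyKernel N s g (-z) = levyKernel N s g z := by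
  simp only [levyKernel, norm_neg, smul_neg, hg.2.2]

lemma measurable_levyKernel (hg : H1 N g) : Measurable (levyKernel N s g) :=
  (hg.1.measurable.comp (measurable_norm.inv.smul measurable_id)).mul
    (measurable_norm.pow_const _)

lemma exists_levyKernel_le (s : ℝ) (hg : H1 N g) :
    ∃ G : ℝ, 0 ≤ G ∧ ∀ z : EN N, levyKernel N s g z ≤ G * ‖z‖ ^ (-(N : ℝ) - 2 * s) := by
  obtain ⟨G, hG⟩ := (isCompact_closedBall (0 : EN N) 1).exists_bound_of_continuousOn
    hg.1.continuousOn
  refine ⟨G, (norm_nonneg _).trans (hG 0 (by simp)), fun z => ?_⟩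
  refine mul_le_mul_of_nonneg_right ((le_abs_self _).trans (hG _ ?_)) (by positivity)
  rw [mem_closedBall_zero_iff, norm_smul, norm_inv, norm_norm]
  exact inv_mul_le_one

lemma setIntegral_levyMeasure (hs : 0 < s) (hg : H1 N g) {S : Set (EN N)} (hS : MeasurableSet S)
    (f : EN N → ℝ) : ∫ z in S, f z ∂levyMeasure N s g = ∫ z in S, f z * levyKernel N s g z := by
  rw [levyMeasure, setIntegral_withDensity_eq_setIntegral_toReal_smul
    (measurable_levyKernel hg).ennreal_ofReal (ae_of_all _ fun _ => ENNReal.ofReal_lt_top) f hS]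
  simp only [ENNReal.toReal_ofReal (levyKernel_nonneg hs hg _), smul_eq_mul, mul_comm]

lemma integrableOn_levyMeasure_of_le_rpow (hs : 0 < s) (hg : H1 N g) {S : Set (EN N)}
    (hS : MeasurableSet S) {f : EN N → ℝ} (hf : Continuous f) {C a : ℝ} (hC : 0 ≤ C)
    (h_le : ∀ z ∈ S, |f z| ≤ C * ‖z‖ ^ a)
    (h_int : IntegrableOn (fun z : EN N => ‖z‖ ^ (a + (-(N : ℝ) - 2 * s))) S) :
    IntegrableOn f S (levyMeasure N s g) := by
  obtain ⟨G, hG, h_kernel⟩ := exists_levyKernel_le s hg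
  rw [IntegrableOn, levyMeasure, restrict_withDensity hS,
    integrable_withDensity_iff_integrable_smul' (measurable_levyKernel hg).ennreal_ofReal
      (ae_of_all _ fun _ => ENNReal.ofReal_lt_top)]
  simp only [ENNReal.toReal_ofReal (levyKernel_nonneg hs hg _)]
  refine (h_int.const_mul (G * C)).mono'
    ((measurable_levyKernel hg).smul hf.measurable).aestronglyMeasurable <|
    ae_restrict_of_forall_mem hS fun z hz => ?_
  rw [norm_smul, Real.norm_of_nonneg (levyKernel_nonneg hs hg z), Real.norm_eq_abs]
  obtain rfl | h_ne := eq_or_ne z 0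
  · rw [levyKernel_zero hs g, zero_mul]
    positivity
  · calc levyKernel N s g z * |f z|
        ≤ G * ‖z‖ ^ (-(N : ℝ) - 2 * s) * (C * ‖z‖ ^ a) :=
          mul_le_mul (h_kernel z) (h_le z hz) (abs_nonneg _) (by positivity)
      _ = G * C * ‖z‖ ^ (a + (-(N : ℝ) - 2 * s)) := by
          rw [Real.rpow_add (norm_pos_iff.2 h_ne)]
          ring

lemma isSymmLevyMeasure_levyMeasure (hN : 1 ≤ N) (hs : s ∈ Ioo (0 : ℝ) 1) (hg : H1 N g) :
    IsSymmLevyMeasure (levyMeasure N s g) where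
  toIsNegInvariant := isNegInvariant_withDensity fun z => by rw [levyKernel_neg hg]
  integrableOn_norm_sq := by
    have : Nonempty (Fin N) := ⟨⟨0, hN⟩⟩
    refine integrableOn_levyMeasure_of_le_rpow hs.1 hg (measurableSet_norm_le 1) (by fun_prop)
      zero_le_one (a := 2) (fun z _ => ?_) (integrableOn_norm_rpow_norm_le volume ?_ 1)
    · rw [abs_sq, one_mul, Real.rpow_two]
    · rw [finrank_euclideanSpace_fin]
      linarith [hs.2]
  integrableOn_logWeight := by
    have : Nonempty (Fin N) := ⟨⟨0, hN⟩⟩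
    have hs0 := hs.1
    refine integrableOn_levyMeasure_of_le_rpow hs0 hg (measurableSet_lt_norm 1)
      continuous_logWeight (C := 1 + 2 ^ (s / 2) / (s / 2)) (a := s) (by positivity)
      (fun z hz => ?_)
      (integrableOn_norm_rpow_lt_norm volume ?_ one_pos)
    · rw [abs_of_nonneg (logWeight_nonneg z)]
      exact logWeight_le_mul_rpow hs0 hz
    · rw [finrank_euclideanSpace_fin]
      linarith

lemma levyI1_eq_nearLevy (hs : 0 < s) (hg : H1 N g) (φ : EN N → ℝ) (r : ℝ) (x : EN N) :
    levyI1 N s g φ r x = nearLevy (levyMeasure N s g) φ r x :=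
  (setIntegral_levyMeasure hs hg (measurableSet_norm_le r) _).symm

lemma levyI2_eq_farLevy (hs : 0 < s) (hg : H1 N g) (u : EN N → ℝ) (r : ℝ) (x : EN N) :
    levyI2 N s g u r x = farLevy (levyMeasure N s g) u r x :=
  (setIntegral_levyMeasure hs hg (measurableSet_lt_norm r) _).symm

end LevyKernel

section EuclideanCellProblem

variable {N : ℕ} {s : ℝ} {g : EN N → ℝ} {W : ℝ → ℝ} {σ : ℝ → EN N → ℝ} {p : EN N} {L : ℝ}
  {w : ℝ → EN N → ℝ}

lemma LocBddPos.exists_abs_le (h : LocBddPos N w) (h_init : ∀ x, w 0 x = 0) (T : ℝ) :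
    ∃ M, ∀ t ∈ Icc (0 : ℝ) T, ∀ x, |w t x| ≤ M := by
  obtain ⟨M, hM⟩ := h (max T 1) (by positivity)
  refine ⟨max M 0, fun t ht x => ?_⟩
  obtain rfl | h_pos := ht.1.eq_or_lt
  · simp only [h_init, abs_zero, le_max_right]
  · exact (hM t ⟨h_pos, ht.2.trans (le_max_left _ _)⟩ x).trans (le_max_left _ _)

lemma IsSol.eq_zero_of_cellF (h : IsSol N s g (cellF N W σ p L) (fun _ => 0) w) (x : EN N) :
    w 0 x = 0 :=
  le_antisymm (h.2.1.2.2.1 x) (h.2.2.2.2.1 x)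

lemma IsSol.isViscositySol_cellRHS (hs : 0 < s) (hg : H1 N g)
    (h : IsSol N s g (cellF N W σ p L) (fun _ => 0) w) :
    IsViscositySol (levyMeasure N s g) (cellRHS (deriv W) σ p L) w where
  sub :=
    { continuousOn := h.1
      bounded := h.2.1.2.1.exists_abs_le h.eq_zero_of_cellF
      deriv_le := fun t₀ x₀ ht₀ φ hφ τ r hτ hτt hr hmax => by
        have h_test := h.2.1.2.2.2 t₀ x₀ ht₀ φ hφ τ r hτ hτt hr fun t x ht hx => hmax t ht x hx
        rw [levyI1_eq_nearLevy hs hg, levyI2_eq_farLevy hs hg] at h_test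
        simp only [cellF] at h_test
        simp only [cellRHS]
        linarith }
  super :=
    { continuousOn := h.1.neg
      bounded := by
        simpa only [abs_neg] using h.2.1.2.1.exists_abs_le h.eq_zero_of_cellF
      deriv_le := fun t₀ x₀ ht₀ φ hφ τ r hτ hτt hr hmax => by
        have h_test := h.2.2.2.2.2 t₀ x₀ ht₀ (fun t x => -φ t x) hφ.neg τ r hτ hτt hr
          fun t x ht hx => by linarith [hmax t ht x hx]
        rw [levyI1_eq_nearLevy hs hg, levyI2_eq_farLevy hs hg, nearLevy_neg, deriv.fun_neg]
          at h_test
        simp only [cellF] at h_test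
        rw [farLevy_neg]
        simp only [cellRHS, neg_neg]
        linarith }

lemma SlopeLim.hasSlope {l : ℝ} (h : SlopeLim N w l) : HasSlope w l := by
  refine tendstoLocallyUniformly_iff_forall_isCompact.2 fun S hS =>
    Metric.tendstoUniformlyOn_iff.2 fun ε hε => ?_
  obtain ⟨R, hR, hSR⟩ := hS.isBounded.exists_pos_norm_le
  obtain ⟨T, hT⟩ := h (ε / 2) (half_pos hε) R hR
  filter_upwards [eventually_ge_atTop T] with t ht y hy
  rw [dist_comm, Real.dist_eq]
  exact (hT t ht y (hSR y hy)).trans_lt (half_lt_self hε)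

lemma exists_norm_sub_intCast_le (x : EN N) :
    ∃ k : Fin N → ℤ, ‖x - (WithLp.equiv 2 (Fin N → ℝ)).symm (fun j => (k j : ℝ))‖ ≤ √N := by
  refine ⟨fun j => ⌊x j⌋, ?_⟩
  rw [EuclideanSpace.norm_eq]
  refine Real.sqrt_le_sqrt ((Finset.sum_le_card_nsmul _ _ 1 fun j _ => ?_).trans_eq (by simp))
  change ‖Int.fract (x j)‖ ^ 2 ≤ 1
  rw [Real.norm_eq_abs, Int.abs_fract]
  exact pow_le_one₀ (Int.fract_nonneg _) (Int.fract_lt_one _).le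

lemma exists_isPeriodicCellData (hW : H2 W) (hσ : H3 N σ) :
    ∃ K, IsPeriodicCellData (deriv W) σ K := by
  obtain ⟨-, ⟨K₁, hK₁⟩, hW_per⟩ := hW
  obtain ⟨⟨K₂, hK₂⟩, h_time, h_space⟩ := hσ
  refine ⟨max K₁ K₂, hK₁.weaken (le_max_left _ _), fun v => ?_, hK₂.weaken (le_max_right _ _),
    fun x t => h_time t x, √N, fun x => ?_⟩
  · rw [← deriv_comp_add_const, funext hW_per]
  · obtain ⟨k, hk⟩ := exists_norm_sub_intCast_le x
    exact ⟨_, hk, fun t y => h_space k t y⟩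

lemma isEffectiveHamiltonian_of_isSol (hs : 0 < s) (hg : H1 N g) {H : EN N → ℝ → ℝ}
    (h : ∀ p L, ∃ w, IsSol N s g (cellF N W σ p L) (fun _ => 0) w ∧ SlopeLim N w (H p L)) :
    IsEffectiveHamiltonian (levyMeasure N s g) (deriv W) σ H := by
  intro p L
  obtain ⟨w, hw, h_slope⟩ := h p L
  exact ⟨w, hw.isViscositySol_cellRHS hs hg, hw.eq_zero_of_cellF, h_slope.hasSlope⟩

end EuclideanCellProblem

theorem effective_hamiltonian_properties_general {E : Type*} [NormedAddCommGroup E]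
    [InnerProductSpace ℝ E] [ProperSpace E] [MeasurableSpace E] [BorelSpace E] {ν : Measure E}
    [IsSymmLevyMeasure ν] {b : ℝ → ℝ} {σ : ℝ → E → ℝ} {K : NNReal}
    (hd : IsPeriodicCellData b σ K) {H : E → ℝ → ℝ} (h : IsEffectiveHamiltonian ν b σ H) :
    Continuous (fun q : E × ℝ => H q.1 q.2) ∧
    (∀ p, Tendsto (H p) atTop atTop) ∧
    (∀ p, Tendsto (H p) atBot atBot) ∧
    (∀ p, Monotone (H p)) ∧
    ((∀ t y, σ t (-y) = σ t y) → ∀ p L, H p L = H (-p) L) ∧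
    ((∀ v, b (-v) = -b v) → (∀ t y, σ t (-y) = -σ t y) → ∀ p L, H p (-L) = -H p L) := by
  refine ⟨h.continuous hd, fun p => ?_, fun p => ?_, h.monotone hd, fun h_even p L => ?_,
    fun h_odd_b h_odd_σ p L => ?_⟩
  · obtain ⟨C, hC⟩ := h.exists_sub_le hd
    exact tendsto_atTop_mono (hC p) (tendsto_atTop_add_const_right _ (-C) tendsto_id)
  · obtain ⟨C, hC⟩ := h.exists_le_add hd
    exact tendsto_atBot_mono (hC p) (tendsto_atBot_add_const_right _ C tendsto_id)
  · have h_reflect := h.comp_neg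
    simp only [h_even] at h_reflect
    exact congrFun₂ (h.unique hd h_reflect) p L
  · have h_reflect := h.neg.comp_neg
    simp only [h_odd_b, h_odd_σ, neg_neg] at h_reflect
    rw [congrFun₂ (h.unique hd h_reflect) p (-L), neg_neg]

/-- **Properties of the effective Hamiltonian (Proposition 3.2).** Under (H1)–(H4), `H̄` is
continuous and: (i) `H̄(p,L) → ±∞` as `L → ±∞`; (ii) `H̄(p,·)` is nondecreasing;
(iii) if `σ` is even in `y`, then `H̄(p,L) = H̄(−p,L)`;
(iv) if `W'` is odd and `σ` is odd in `y`, then `H̄(p,−L) = −H̄(p,L)`. -/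
theorem effective_hamiltonian_properties
    (N : ℕ) (hN : 1 ≤ N) (s : ℝ) (hs : s ∈ Set.Ioo (0:ℝ) 1)
    (g : EN N → ℝ) (hg : H1 N g)
    (W : ℝ → ℝ) (hW : H2 W)
    (σ : ℝ → EN N → ℝ) (hσ : H3 N σ)
    (u₀ : EN N → ℝ) (hu₀ : H4 N u₀)
    -- `H̄` is the effective Hamiltonian given by the ergodicity theorem:
    (Hbar : EN N → ℝ → ℝ)
    (hHbar : ∀ (p : EN N) (L : ℝ), ∃ w : ℝ → EN N → ℝ,
      IsSol N s g (cellF N W σ p L) (fun _ => 0) w ∧ SlopeLim N w (Hbar p L)) :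
    Continuous (fun q : EN N × ℝ => Hbar q.1 q.2) ∧
    (∀ p : EN N, Tendsto (Hbar p) atTop atTop) ∧
    (∀ p : EN N, Tendsto (Hbar p) atBot atBot) ∧
    (∀ p : EN N, Monotone (Hbar p)) ∧
    ((∀ (τ : ℝ) (y : EN N), σ τ (-y) = σ τ y) →
      ∀ (p : EN N) (L : ℝ), Hbar p L = Hbar (-p) L) ∧
    ((∀ v : ℝ, deriv W (-v) = -deriv W v) →
      (∀ (τ : ℝ) (y : EN N), σ τ (-y) = -σ τ y) →
      ∀ (p : EN N) (L : ℝ), Hbar p (-L) = -Hbar p L) := by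
  obtain ⟨K, hd⟩ := exists_isPeriodicCellData hW hσ
  have := isSymmLevyMeasure_levyMeasure hN hs hg
  exact effective_hamiltonian_properties_general hd (isEffectiveHamiltonian_of_isSol hs.1 hg hHbar)
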